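/- Assume the additive-noise setting, let α ∈ (0,∞), p ∈ (1, min{1+2α, 2}), c̃ ∈ [0,∞), c ∈ [p,∞), and assume that α − c̃·x^c ≤ x·μ(x) for all x ∈ (0,∞). Then for all t ∈ [0,T], ρ ∈ (0,∞) and ρ̃ ∈ (0,ρ) it holds that E[ exp( ρ̃(2−p)(α + (1−p)/2) ∫_0^t (X_s)^{−p} ds − c̃ρ(2−p) ∫_0^t (X_s)^{c−p} ds − ρ(X_t)^{2−p} ) ] ≤ exp( (tρ²/2) · [ ρ² / ((ρ−ρ̃)(2α+1−p)) ]^{(2p−2)/(2−p)} ) · E[ exp(−ρ(X_0)^{2−p}) ] < ∞, where the expectation on the left is computed in the extended reals (in particular (X_s)^{−p} = ∞ when X_s = 0 and exp(−∞) = 0). -/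

import Mathlib

open MeasureTheory ProbabilityTheory Filter Set
open scoped ENNReal NNReal

noncomputable section

/-- `expENN x` is `exp(x)` for an extended nonnegative real `x`,
with the convention `exp(∞) = ∞`. -/
def expENN (x : ℝ≥0∞) : ℝ≥0∞ := if x = ⊤ then ⊤ else ENNReal.ofReal (Real.exp x.toReal)

/-!
For smooth `f` with bounded `f'` and `f''`, the exponential supermartingale gives
`E[exp (-f (X t) + ∫₀ᵗ (f' μ + f'' / 2 - f' ^ 2 / 2) (X s) ds)] ≤ E[exp (-f (X 0))]`.
Stochastic integration is avoided: along a partition of `[0, t]`, a second-order Taylor expansion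
bounds the left-hand integrand by a product of weights that are quadratic exponentials of the
Brownian increments, each of conditional mean at most one; Fatou's lemma passes to the limit.

The inequality is applied twice with `f (x) = a (x ^ 2 + δ ^ 2) ^ (r / 2)`, as `δ → 0`. For `a = δ`
and `r = 1` the compensator tends to `1 / 2` on `{x = 0}` and to `0` elsewhere, so `X` spends no
time at `0`. For `a = ρ` and `r = 2 - p` the drift condition, which holds only on `(0, ∞)`, bounds
the compensator from below by the integrand of the theorem with `x` regularised. The gap `ρ - ρt`
between the two coefficients absorbs `f' ^ 2 / 2` near `0`, and away from `0` this term is bounded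
by the constant in the theorem.
-/

section Gaussian

theorem gaussianPDFReal_mul_exp_quadratic {v : ℝ≥0} (hv : v ≠ 0) {h k : ℝ}
    (hk : 0 < 1 - 2 * k * v) (x : ℝ) :
    gaussianPDFReal 0 v x * Real.exp (h * x + k * x ^ 2) =
      Real.exp (h ^ 2 * v / (2 * (1 - 2 * k * v))) * (√(1 - 2 * k * v))⁻¹ *
        gaussianPDFReal (h * v / (1 - 2 * k * v)) (v / (1 - 2 * k * v)).toNNReal x := by
  have : (0 : ℝ) < v := by positivity
  set D : ℝ := 1 - 2 * k * v with hD
  have hsqrt : √(2 * Real.pi * (v / D)) = √(2 * Real.pi * v) * (√D)⁻¹ := by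
    rw [← Real.sqrt_inv, ← Real.sqrt_mul (by positivity)]
    ring_nf
  have hsquare : -(x - 0) ^ 2 / (2 * (v : ℝ)) + (h * x + k * x ^ 2) =
      h ^ 2 * v / (2 * D) + -(x - h * v / D) ^ 2 / (2 * (v / D)) := by
    have hk_eq : k = (1 - D) / (2 * v) := by rw [hD]; field_simp; ring
    rw [hk_eq]
    field_simp
    ring
  have : 0 < √D := Real.sqrt_pos.mpr hk
  rw [gaussianPDFReal, gaussianPDFReal, Real.coe_toNNReal _ (by positivity), mul_assoc,
    ← Real.exp_add, hsquare, Real.exp_add, hsqrt, mul_inv, inv_inv]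
  field_simp

theorem lintegral_exp_quadratic_gaussianReal (v : ℝ≥0) {h k : ℝ} (hk : 0 < 1 - 2 * k * v) :
    ∫⁻ x, ENNReal.ofReal (Real.exp (h * x + k * x ^ 2)) ∂gaussianReal 0 v =
      ENNReal.ofReal (Real.exp (h ^ 2 * v / (2 * (1 - 2 * k * v))) * (√(1 - 2 * k * v))⁻¹) := by
  rcases eq_or_ne v 0 with rfl | hv
  · simp
  have hvar : (v / (1 - 2 * k * v) : ℝ).toNNReal ≠ 0 :=
    (Real.toNNReal_pos.mpr (by positivity)).ne'
  have hdensity (x : ℝ) : gaussianPDF 0 v x * ENNReal.ofReal (Real.exp (h * x + k * x ^ 2)) =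
      ENNReal.ofReal (Real.exp (h ^ 2 * v / (2 * (1 - 2 * k * v))) * (√(1 - 2 * k * v))⁻¹) *
        gaussianPDF (h * v / (1 - 2 * k * v)) (v / (1 - 2 * k * v)).toNNReal x := by
    rw [gaussianPDF, gaussianPDF, ← ENNReal.ofReal_mul (gaussianPDFReal_nonneg _ _ _),
      ← ENNReal.ofReal_mul (by positivity), gaussianPDFReal_mul_exp_quadratic hv hk]
  rw [gaussianReal_of_var_ne_zero _ hv,
    lintegral_withDensity_eq_lintegral_mul _ (measurable_gaussianPDF _ _) (by fun_prop)]
  simp only [Pi.mul_apply, hdensity]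
  rw [lintegral_const_mul _ (measurable_gaussianPDF _ _), lintegral_gaussianPDF_eq_one _ hvar,
    mul_one]

theorem inv_sqrt_one_sub_two_mul_le_exp {a : ℝ} (ha : 0 < 1 - 2 * a) :
    (√(1 - 2 * a))⁻¹ ≤ Real.exp (a / (1 - 2 * a)) := by
  have hlog : 1 - (1 - 2 * a)⁻¹ ≤ Real.log (1 - 2 * a) := Real.one_sub_inv_le_log_of_pos ha
  have hdiv : a / (1 - 2 * a) = ((1 - 2 * a)⁻¹ - 1) / 2 := by
    rw [div_eq_mul_inv]
    linear_combination -1 / 2 * mul_inv_cancel₀ ha.ne'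
  calc (√(1 - 2 * a))⁻¹ = Real.exp (-(Real.log (1 - 2 * a) / 2)) := by
        rw [Real.exp_neg, ← Real.log_sqrt ha.le, Real.exp_log (Real.sqrt_pos.mpr ha)]
    _ ≤ Real.exp (a / (1 - 2 * a)) := Real.exp_le_exp.mpr (by linarith)

theorem lintegral_exp_quadratic_gaussianReal_le (v : ℝ≥0) {h k : ℝ} (hk : 0 < 1 - 2 * k * v) :
    ∫⁻ x, ENNReal.ofReal (Real.exp (h * x + k * x ^ 2)) ∂gaussianReal 0 v ≤
      ENNReal.ofReal (Real.exp ((h ^ 2 / 2 + k) * v / (1 - 2 * k * v))) := by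
  have hsplit : (h ^ 2 / 2 + k) * v / (1 - 2 * k * v) =
      h ^ 2 * v / (2 * (1 - 2 * k * v)) + k * v / (1 - 2 * k * v) := by field_simp
  have hsqrt := inv_sqrt_one_sub_two_mul_le_exp (a := k * v) (by rwa [← mul_assoc])
  rw [← mul_assoc] at hsqrt
  rw [lintegral_exp_quadratic_gaussianReal v hk, hsplit, Real.exp_add]
  gcongr

theorem lintegral_exp_quadratic_sub_gaussianReal_le_one (v : ℝ≥0) {h k c : ℝ}
    (hk : 0 < 1 - 2 * k * v) (hc : (h ^ 2 / 2 + k) * v / (1 - 2 * k * v) ≤ c) :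
    ∫⁻ x, ENNReal.ofReal (Real.exp (h * x + k * x ^ 2 - c)) ∂gaussianReal 0 v ≤ 1 :=
  calc ∫⁻ x, ENNReal.ofReal (Real.exp (h * x + k * x ^ 2 - c)) ∂gaussianReal 0 v
      = (∫⁻ x, ENNReal.ofReal (Real.exp (h * x + k * x ^ 2)) ∂gaussianReal 0 v) *
          ENNReal.ofReal (Real.exp (-c)) := by
        rw [← lintegral_mul_const _ (by fun_prop)]
        simp only [← ENNReal.ofReal_mul (Real.exp_nonneg _), ← Real.exp_add, sub_eq_add_neg]
    _ ≤ ENNReal.ofReal (Real.exp c) * ENNReal.ofReal (Real.exp (-c)) := by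
        gcongr
        exact (lintegral_exp_quadratic_gaussianReal_le v hk).trans (by gcongr)
    _ = 1 := by
        rw [← ENNReal.ofReal_mul (Real.exp_nonneg _), ← Real.exp_add, add_neg_cancel,
          Real.exp_zero, ENNReal.ofReal_one]

theorem exists_lintegral_exp_quadratic_sub_gaussianReal_le_one (B K : ℝ) {η : ℝ} (hη : 0 < η) :
    ∃ v₀ > (0 : ℝ), ∀ v : ℝ≥0, v ≤ v₀ → ∀ h k : ℝ, |h| ≤ B → |k| ≤ K →
      ∫⁻ x, ENNReal.ofReal (Real.exp (h * x + k * x ^ 2 - (h ^ 2 / 2 + k + η) * v))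
        ∂gaussianReal 0 v ≤ 1 := by
  refine ⟨η / (2 * |K| * (B ^ 2 / 2 + |K| + 1 + η) + 1), by positivity, ?_⟩
  intro v hv h k hh hk
  have hkK : |k| ≤ |K| := hk.trans (le_abs_self K)
  have hsmall : 2 * |K| * v * (B ^ 2 / 2 + |K| + 1 + η) ≤ η := by
    have := (le_div_iff₀ (by positivity)).mp hv
    nlinarith [v.2]
  have hkv : |2 * k * v| ≤ 2 * |K| * v := by
    rw [abs_mul, abs_mul, abs_two, NNReal.abs_eq]
    gcongr
  have hD : 0 < 1 - 2 * k * v := by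
    nlinarith [le_abs_self (2 * k * v), sq_nonneg B, abs_nonneg K, mul_nonneg (abs_nonneg K) v.2]
  have hdrift : |h ^ 2 / 2 + k + η| ≤ B ^ 2 / 2 + |K| + 1 + η := by
    have hsq : h ^ 2 ≤ B ^ 2 := sq_le_sq.mpr (hh.trans (le_abs_self B))
    obtain ⟨hk_lower, hk_upper⟩ := abs_le.mp hkK
    exact abs_le.mpr ⟨by nlinarith [sq_nonneg h, sq_nonneg B], by linarith⟩
  have hprod : (2 * k * v) * (h ^ 2 / 2 + k + η) ≤ η :=
    calc (2 * k * v) * (h ^ 2 / 2 + k + η) ≤ |2 * k * v| * |h ^ 2 / 2 + k + η| := by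
          rw [← abs_mul]; exact le_abs_self _
      _ ≤ 2 * |K| * v * (B ^ 2 / 2 + |K| + 1 + η) := by gcongr
      _ ≤ η := hsmall
  refine lintegral_exp_quadratic_sub_gaussianReal_le_one v hD ?_
  rw [div_le_iff₀ hD]
  nlinarith [mul_le_mul_of_nonneg_left hprod v.2]

end Gaussian

section Independence

variable {Ω β γ : Type*} {m mΩ : MeasurableSpace Ω} [MeasurableSpace β] [MeasurableSpace γ]
  {P : Measure Ω} [IsFiniteMeasure P]

theorem lintegral_mul_comp_le_of_indep (hm : m ≤ mΩ) {G : Ω → ℝ≥0∞}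
    (hG : Measurable[m] G) {U : Ω → β} (hU : Measurable[m] U) {N : Ω → γ} (hN : Measurable N)
    (hindep : Indep (MeasurableSpace.comap N inferInstance) m P) {Φ : β × γ → ℝ≥0∞}
    (hΦ : Measurable Φ) (hΦ_le : ∀ u, ∫⁻ x, Φ (u, x) ∂P.map N ≤ 1) :
    ∫⁻ ω, G ω * Φ (U ω, N ω) ∂P ≤ ∫⁻ ω, G ω ∂P := by
  have hGU : Measurable[m] fun ω => (G ω, U ω) := hG.prodMk hU
  have hGU' : Measurable fun ω => (G ω, U ω) := hGU.mono hm le_rfl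
  have hindepFun : IndepFun (fun ω => (G ω, U ω)) N P :=
    (IndepFun_iff_Indep _ _ _).mpr (indep_of_indep_of_le_right hindep hGU.comap_le).symm
  have hΨ : Measurable fun z : (ℝ≥0∞ × β) × γ => z.1.1 * Φ (z.1.2, z.2) := by fun_prop
  calc ∫⁻ ω, G ω * Φ (U ω, N ω) ∂P
      = ∫⁻ z, z.1.1 * Φ (z.1.2, z.2) ∂P.map fun ω => ((G ω, U ω), N ω) :=
        (lintegral_map hΨ (hGU'.prodMk hN)).symm
    _ = ∫⁻ u, ∫⁻ x, u.1 * Φ (u.2, x) ∂P.map N ∂P.map fun ω => (G ω, U ω) := by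
        rw [(indepFun_iff_map_prod_eq_prod_map_map hGU'.aemeasurable hN.aemeasurable).mp hindepFun,
          lintegral_prod _ hΨ.aemeasurable]
    _ ≤ ∫⁻ u, u.1 ∂P.map fun ω => (G ω, U ω) := lintegral_mono fun u => by
        rw [lintegral_const_mul _ (by fun_prop)]
        exact mul_le_of_le_one_right' (hΦ_le u.2)
    _ = ∫⁻ ω, G ω ∂P := lintegral_map measurable_fst hGU'

theorem lintegral_mul_prod_comp_le_of_indep {ℱ : Filtration ℕ mΩ} {G : Ω → ℝ≥0∞}
    (hG : Measurable[ℱ 0] G) {U : ℕ → Ω → β} {N : ℕ → Ω → γ} {Φ : β × γ → ℝ≥0∞}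
    (hΦ : Measurable Φ) {n : ℕ} (hU : ∀ i < n, Measurable[ℱ i] (U i))
    (hN : ∀ i < n, Measurable[ℱ (i + 1)] (N i))
    (hindep : ∀ i < n, Indep (MeasurableSpace.comap (N i) inferInstance) (ℱ i) P)
    (hΦ_le : ∀ i < n, ∀ u, ∫⁻ x, Φ (u, x) ∂P.map (N i) ≤ 1) :
    ∫⁻ ω, G ω * ∏ i ∈ Finset.range n, Φ (U i ω, N i ω) ∂P ≤ ∫⁻ ω, G ω ∂P := by
  induction n with
  | zero => simp
  | succ n ih =>
    have hpast : Measurable[ℱ n] fun ω => G ω * ∏ i ∈ Finset.range n, Φ (U i ω, N i ω) := by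
      refine (hG.mono (ℱ.mono n.zero_le) le_rfl).mul ?_
      refine Finset.measurable_prod _ fun i hi => ?_
      have hin : i < n := Finset.mem_range.mp hi
      exact hΦ.comp (((hU i (by omega)).mono (ℱ.mono hin.le) le_rfl).prodMk
        ((hN i (by omega)).mono (ℱ.mono hin) le_rfl))
    calc ∫⁻ ω, G ω * ∏ i ∈ Finset.range (n + 1), Φ (U i ω, N i ω) ∂P
        = ∫⁻ ω, (G ω * ∏ i ∈ Finset.range n, Φ (U i ω, N i ω)) * Φ (U n ω, N n ω) ∂P := by
          simp only [Finset.prod_range_succ, mul_assoc]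
      _ ≤ ∫⁻ ω, G ω * ∏ i ∈ Finset.range n, Φ (U i ω, N i ω) ∂P :=
          lintegral_mul_comp_le_of_indep (ℱ.le n) hpast (hU n n.lt_succ_self)
            ((hN n n.lt_succ_self).mono (ℱ.le _) le_rfl) (hindep n n.lt_succ_self) hΦ
            (hΦ_le n n.lt_succ_self)
      _ ≤ ∫⁻ ω, G ω ∂P :=
          ih (fun i hi => hU i (by omega)) (fun i hi => hN i (by omega))
            (fun i hi => hindep i (by omega)) (fun i hi => hΦ_le i (by omega))

end Independence

section Discretisation

theorem abs_sub_taylor_two_le {f f' f'' : ℝ → ℝ} {x y δ : ℝ}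
    (hf : ∀ z ∈ uIcc x y, HasDerivAt f (f' z) z) (hf' : ∀ z ∈ uIcc x y, HasDerivAt f' (f'' z) z)
    (hδ : ∀ z ∈ uIcc x y, |f'' z - f'' x| ≤ δ) :
    |f y - f x - f' x * (y - x) - f'' x / 2 * (y - x) ^ 2| ≤ δ * (y - x) ^ 2 := by
  have hδ0 : 0 ≤ δ := (abs_nonneg _).trans (hδ x left_mem_uIcc)
  have hfirst (z) (hz : z ∈ uIcc x y) : |f' z - f' x - f'' x * (z - x)| ≤ δ * |y - x| := by
    have hderiv (u) (hu : u ∈ uIcc x y) :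
        HasDerivWithinAt (fun u => f' u - f'' x * u) (f'' u - f'' x * 1) (uIcc x y) u :=
      ((hf' u hu).sub ((hasDerivAt_id' u).const_mul _)).hasDerivWithinAt
    have hmvt := (convex_uIcc x y).norm_image_sub_le_of_norm_hasDerivWithin_le hderiv
      (fun u hu => by simpa using hδ u hu) left_mem_uIcc hz
    calc |f' z - f' x - f'' x * (z - x)| = ‖f' z - f'' x * z - (f' x - f'' x * x)‖ := by
          rw [Real.norm_eq_abs]; ring_nf
      _ ≤ δ * |z - x| := hmvt
      _ ≤ δ * |y - x| := by gcongr δ * ?_; exact abs_sub_left_of_mem_uIcc hz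
  have hderiv (z) (hz : z ∈ uIcc x y) :
      HasDerivWithinAt (fun z => f z - f' x * (z - x) - f'' x / 2 * (z - x) ^ 2)
        (f' z - f' x - f'' x * (z - x)) (uIcc x y) z := by
    have hlin : HasDerivAt (fun z => z - x) 1 z := (hasDerivAt_id' z).sub_const x
    refine (((hf z hz).sub (hlin.const_mul _)).sub ((hlin.pow 2).const_mul _)).hasDerivWithinAt
      |>.congr_deriv ?_
    norm_num
    ring
  have hmvt := (convex_uIcc x y).norm_image_sub_le_of_norm_hasDerivWithin_le hderiv hfirst
    left_mem_uIcc right_mem_uIcc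
  calc |f y - f x - f' x * (y - x) - f'' x / 2 * (y - x) ^ 2|
      = ‖f y - f' x * (y - x) - f'' x / 2 * (y - x) ^ 2 -
          (f x - f' x * (x - x) - f'' x / 2 * (x - x) ^ 2)‖ := by
        rw [Real.norm_eq_abs]; ring_nf
    _ ≤ δ * |y - x| * |y - x| := hmvt
    _ = δ * (y - x) ^ 2 := by rw [mul_assoc, ← sq, sq_abs]

/-- The `i`-th point of the partition of `[0, t]` into `n` cells of equal length. -/
def gridPoint (t : ℝ) (n i : ℕ) : ℝ := i * (t / n)

theorem gridPoint_zero (t : ℝ) (n : ℕ) : gridPoint t n 0 = 0 := by simp [gridPoint]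

theorem gridPoint_self (t : ℝ) {n : ℕ} (hn : n ≠ 0) : gridPoint t n n = t := by
  rw [gridPoint]
  field_simp

theorem gridPoint_succ_sub (t : ℝ) (n i : ℕ) :
    gridPoint t n (i + 1) - gridPoint t n i = t / n := by
  rw [gridPoint, gridPoint]
  push_cast
  ring

theorem monotone_gridPoint {t : ℝ} (ht : 0 ≤ t) (n : ℕ) : Monotone (gridPoint t n) := by
  intro i j hij
  rw [gridPoint, gridPoint]
  gcongr

theorem gridPoint_mem_Icc {t : ℝ} (ht : 0 ≤ t) {n i : ℕ} (hi : i ≤ n) :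
    gridPoint t n i ∈ Icc 0 t := by
  rcases eq_or_ne n 0 with rfl | hn
  · simpa [gridPoint] using ht
  · exact ⟨(gridPoint_zero t n).ge.trans (monotone_gridPoint ht n i.zero_le),
      (monotone_gridPoint ht n hi).trans (gridPoint_self t hn).le⟩

theorem Icc_gridPoint_subset {t : ℝ} (ht : 0 ≤ t) {n i : ℕ} (hi : i < n) :
    Icc (gridPoint t n i) (gridPoint t n (i + 1)) ⊆ Icc 0 t :=
  Icc_subset_Icc (gridPoint_mem_Icc ht hi.le).1 (gridPoint_mem_Icc ht hi).2

theorem uIcc_gridPoint_subset {t : ℝ} (ht : 0 ≤ t) {n i : ℕ} (hi : i < n) :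
    uIcc (gridPoint t n i) (gridPoint t n (i + 1)) ⊆ uIcc 0 t := by
  rw [uIcc_of_le ht, uIcc_of_le (monotone_gridPoint ht n i.le_succ)]
  exact Icc_gridPoint_subset ht hi

theorem sum_integral_gridPoint {t : ℝ} (ht : 0 ≤ t) {n : ℕ} (hn : n ≠ 0) {g : ℝ → ℝ}
    (hg : IntervalIntegrable g volume 0 t) :
    ∑ i ∈ Finset.range n, ∫ s in gridPoint t n i..gridPoint t n (i + 1), g s =
      ∫ s in 0..t, g s := by
  rw [intervalIntegral.sum_integral_adjacent_intervals (a := gridPoint t n) fun i hi =>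
    hg.mono_set (uIcc_gridPoint_subset ht hi), gridPoint_zero, gridPoint_self t hn]

/-- On each of the `n` cells of `[0, t]`, the function `φ` stays `δ`-close to its value at the
left endpoint of the cell. -/
def GridOscillationLE (t : ℝ) (n : ℕ) (φ : ℝ → ℝ) (δ : ℝ) : Prop :=
  ∀ i < n, ∀ s ∈ Icc (gridPoint t n i) (gridPoint t n (i + 1)), |φ s - φ (gridPoint t n i)| ≤ δ

theorem eventually_gridOscillationLE {t : ℝ} (ht : 0 ≤ t) {φ : ℝ → ℝ}
    (hφ : ContinuousOn φ (Icc 0 t)) {δ : ℝ} (hδ : 0 < δ) :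
    ∀ᶠ n in atTop, GridOscillationLE t n φ δ := by
  obtain ⟨r, hr, hφr⟩ := Metric.uniformContinuousOn_iff.mp
    (isCompact_Icc.uniformContinuousOn_of_continuous hφ) δ hδ
  filter_upwards [(tendsto_const_div_atTop_nhds_zero_nat t).eventually (gt_mem_nhds hr)]
    with n hn i hi s hs
  refine (hφr s (Icc_gridPoint_subset ht hi hs) _ (gridPoint_mem_Icc ht hi.le) ?_).le
  rw [Real.dist_eq, abs_of_nonneg (by linarith [hs.1])]
  linarith [hs.2, gridPoint_succ_sub t n i]

/-- Logarithm of the one-step multiplicative weight of a time step of length `v` with Brownian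
increment `w`; by `exists_lintegral_exp_quadratic_sub_gaussianReal_le_one` the weight has mean at
most one when `v` is small. -/
def logStep (η v h k w : ℝ) : ℝ := h * w + k * w ^ 2 - (h ^ 2 / 2 + k + η) * v

theorem integral_mul_add_le_of_oscillation_le {φ ψ m : ℝ → ℝ} {a b δ : ℝ} (hab : a ≤ b)
    (hm : IntervalIntegrable m volume a b)
    (hφm : IntervalIntegrable (fun s => φ s * m s) volume a b)
    (hψ : IntervalIntegrable ψ volume a b) (hφ_osc : ∀ s ∈ Icc a b, |φ s - φ a| ≤ δ)
    (hψ_osc : ∀ s ∈ Icc a b, |ψ s - ψ a| ≤ δ) :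
    ∫ s in a..b, (φ s * m s + ψ s) ≤
      φ a * (∫ s in a..b, m s) + ψ a * (b - a) + δ * ((∫ s in a..b, |m s|) + (b - a)) := by
  have hpointwise (s) (hs : s ∈ Icc a b) :
      φ s * m s + ψ s ≤ φ a * m s + ψ a + δ * (|m s| + 1) := by
    have hφs : (φ s - φ a) * m s ≤ δ * |m s| := by
      refine (le_abs_self _).trans ?_
      rw [abs_mul]
      exact mul_le_mul_of_nonneg_right (hφ_osc s hs) (abs_nonneg _)
    linarith [(abs_le.mp (hψ_osc s hs)).2]
  have hconst {c : ℝ} : IntervalIntegrable (fun _ : ℝ => c) volume a b := intervalIntegrable_const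
  calc ∫ s in a..b, (φ s * m s + ψ s)
      ≤ ∫ s in a..b, (φ a * m s + ψ a + δ * (|m s| + 1)) :=
        intervalIntegral.integral_mono_on hab (hφm.add hψ)
          (((hm.const_mul _).add hconst).add ((hm.abs.add hconst).const_mul _)) hpointwise
    _ = _ := by
        rw [intervalIntegral.integral_add ((hm.const_mul _).add hconst)
            ((hm.abs.add hconst).const_mul _),
          intervalIntegral.integral_add (hm.const_mul _) hconst,
          intervalIntegral.integral_const_mul, intervalIntegral.integral_const_mul,
          intervalIntegral.integral_add hm.abs hconst]
        simp only [intervalIntegral.integral_const, smul_eq_mul, mul_one]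
        ring

-- The slack `η` in the coefficient of `dw ^ 2` absorbs the Taylor remainder, so that no
-- convergence of quadratic variations is needed.
theorem neg_add_le_of_taylor_two {D p q dx dw δ K η : ℝ} (hK : |q| ≤ K) (hδη : 2 * δ ≤ η)
    (htaylor : |D - p * dx - q / 2 * dx ^ 2| ≤ δ * dx ^ 2) (hdx : |dx| ≤ δ) (hdw : |dw| ≤ δ) :
    -D + p * (dx - dw) ≤
      -p * dw + (η - q / 2) * dw ^ 2 + δ * (4 * δ + K) * |dx - dw| := by
  have hδ0 : 0 ≤ δ := (abs_nonneg _).trans hdx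
  have hK0 : 0 ≤ K := (abs_nonneg _).trans hK
  have hremainder : δ * dx ^ 2 ≤ η * dw ^ 2 + 4 * δ ^ 2 * |dx - dw| := by
    have hdrift_sq : (dx - dw) ^ 2 ≤ 2 * δ * |dx - dw| := by
      rw [← sq_abs, sq]
      gcongr
      exact (abs_sub _ _).trans (by linarith)
    nlinarith [sq_nonneg (dx - 2 * dw), sq_nonneg dw, mul_le_mul_of_nonneg_left hdrift_sq hδ0]
  have hsq_diff : |q / 2 * (dx ^ 2 - dw ^ 2)| ≤ δ * K * |dx - dw| :=
    calc |q / 2 * (dx ^ 2 - dw ^ 2)| = |q| / 2 * (|dx + dw| * |dx - dw|) := by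
          rw [sq_sub_sq, abs_mul, abs_mul, abs_div, abs_two]
      _ ≤ K / 2 * (2 * δ * |dx - dw|) := by
          gcongr
          exact (abs_add_le _ _).trans (by linarith)
      _ = δ * K * |dx - dw| := by ring
  linarith [(abs_le.mp htaylor).1, (abs_le.mp hsq_diff).1]

theorem sub_add_integral_le_logStep {f f' f'' x w m : ℝ → ℝ} {a b δ K η : ℝ}
    (hf : ∀ y, HasDerivAt f (f' y) y) (hf' : ∀ y, HasDerivAt f' (f'' y) y)
    (hf'' : Continuous f'') (hK : ∀ y, |f'' y| ≤ K) (hδη : 2 * δ ≤ η) (hab : a ≤ b)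
    (hx : ContinuousOn x (Icc a b)) (hm : IntervalIntegrable m volume a b)
    (hxw : x b - x a = (∫ s in a..b, m s) + (w b - w a))
    (hx_osc : |x b - x a| ≤ δ) (hw_osc : |w b - w a| ≤ δ)
    (hf'_osc : ∀ s ∈ Icc a b, |f' (x s) - f' (x a)| ≤ δ)
    (hf''_osc : ∀ s ∈ Icc a b, |f'' (x s) - f'' (x a)| ≤ δ)
    (hψ_osc : ∀ s ∈ Icc a b,
      |f'' (x s) / 2 - f' (x s) ^ 2 / 2 - (f'' (x a) / 2 - f' (x a) ^ 2 / 2)| ≤ δ) :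
    f (x a) - f (x b) + (∫ s in a..b, (f' (x s) * m s + (f'' (x s) / 2 - f' (x s) ^ 2 / 2))) ≤
      logStep η (b - a) (-f' (x a)) (η - f'' (x a) / 2) (w b - w a) + 2 * η * (b - a) +
        δ * ((1 + 4 * δ + K) * (∫ s in a..b, |m s|) + (b - a)) := by
  have hδ0 : 0 ≤ δ := (abs_nonneg _).trans hx_osc
  have hK0 : 0 ≤ K := (abs_nonneg _).trans (hK 0)
  have hf'_cont : Continuous f' := continuous_iff_continuousAt.mpr fun y => (hf' y).continuousAt
  rw [← uIcc_of_le hab] at hx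
  have hf'x : ContinuousOn (fun s => f' (x s)) (uIcc a b) := hf'_cont.comp_continuousOn hx
  have hf''x : ContinuousOn (fun s => f'' (x s)) (uIcc a b) := hf''.comp_continuousOn hx
  have hψ : IntervalIntegrable (fun s => f'' (x s) / 2 - f' (x s) ^ 2 / 2) volume a b :=
    ((hf''x.div_const 2).sub ((hf'x.pow 2).div_const 2)).intervalIntegrable
  have hdrift := integral_mul_add_le_of_oscillation_le (φ := fun s => f' (x s)) hab hm
    (hm.continuousOn_mul hf'x) hψ hf'_osc hψ_osc
  have hdx_sub_dw : (x b - x a) - (w b - w a) = ∫ s in a..b, m s := by linarith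
  have htaylor := abs_sub_taylor_two_le (x := x a) (y := x b) (fun z _ => hf z)
    (fun z _ => hf' z) (δ := δ) fun z hz => by
      obtain ⟨s, hs, rfl⟩ := intermediate_value_uIcc hx hz
      exact hf''_osc s (uIcc_of_le hab ▸ hs)
  have hstep := neg_add_le_of_taylor_two (hK _) hδη htaylor hx_osc hw_osc
  have hvariation : δ * (4 * δ + K) * |∫ s in a..b, m s| ≤
      δ * (4 * δ + K) * ∫ s in a..b, |m s| := by
    gcongr
    exact intervalIntegral.abs_integral_le_integral_abs hab
  rw [hdx_sub_dw] at hstep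
  rw [logStep]
  linarith

theorem le_sum_logStep_of_gridOscillationLE {f f' f'' x w m : ℝ → ℝ} {t δ K η : ℝ} {n : ℕ}
    (hf : ∀ y, HasDerivAt f (f' y) y) (hf' : ∀ y, HasDerivAt f' (f'' y) y)
    (hf'' : Continuous f'') (hK : ∀ y, |f'' y| ≤ K) (hδη : 2 * δ ≤ η) (ht : 0 ≤ t) (hn : n ≠ 0)
    (hx : ContinuousOn x (Icc 0 t)) (hm : IntervalIntegrable m volume 0 t)
    (hxw : ∀ s ∈ Icc 0 t, x s = x 0 + (∫ u in 0..s, m u) + w s)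
    (hx_osc : GridOscillationLE t n x δ) (hw_osc : GridOscillationLE t n w δ)
    (hf'_osc : GridOscillationLE t n (fun s => f' (x s)) δ)
    (hf''_osc : GridOscillationLE t n (fun s => f'' (x s)) δ)
    (hψ_osc : GridOscillationLE t n (fun s => f'' (x s) / 2 - f' (x s) ^ 2 / 2) δ) :
    -f (x t) + (∫ s in 0..t, (f' (x s) * m s + (f'' (x s) / 2 - f' (x s) ^ 2 / 2))) ≤
      -f (x 0) + (∑ i ∈ Finset.range n, logStep η (t / n) (-f' (x (gridPoint t n i)))
          (η - f'' (x (gridPoint t n i)) / 2) (w (gridPoint t n (i + 1)) - w (gridPoint t n i))) +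
        2 * η * t + δ * ((1 + 4 * δ + K) * (∫ s in 0..t, |m s|) + t) := by
  have hf'_cont : Continuous f' := continuous_iff_continuousAt.mpr fun y => (hf' y).continuousAt
  have hxu : ContinuousOn x (uIcc 0 t) := uIcc_of_le ht ▸ hx
  have hf'x : ContinuousOn (fun s => f' (x s)) (uIcc 0 t) := hf'_cont.comp_continuousOn hxu
  have hf''x : ContinuousOn (fun s => f'' (x s)) (uIcc 0 t) := hf''.comp_continuousOn hxu
  have hintegrand : IntervalIntegrable
      (fun s => f' (x s) * m s + (f'' (x s) / 2 - f' (x s) ^ 2 / 2)) volume 0 t :=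
    (hm.continuousOn_mul hf'x).add
      ((hf''x.div_const 2).sub ((hf'x.pow 2).div_const 2)).intervalIntegrable
  have hcell := Finset.sum_le_sum fun i (hi : i ∈ Finset.range n) => by
    have hin : i < n := Finset.mem_range.mp hi
    have hle := monotone_gridPoint ht n i.le_succ
    have hmem := gridPoint_mem_Icc ht hin.le
    have hmem_succ := gridPoint_mem_Icc ht (Nat.succ_le_of_lt hin)
    have hincrement := intervalIntegral.integral_interval_sub_left
      (hm.mono_set (uIcc_subset_uIcc_left (uIcc_of_le ht ▸ hmem_succ)))
      (hm.mono_set (uIcc_subset_uIcc_left (uIcc_of_le ht ▸ hmem)))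
    exact sub_add_integral_le_logStep hf hf' hf'' hK hδη hle
      (hx.mono (Icc_gridPoint_subset ht hin)) (hm.mono_set (uIcc_gridPoint_subset ht hin))
      (by linarith [hxw _ hmem, hxw _ hmem_succ]) (hx_osc i hin _ (right_mem_Icc.mpr hle))
      (hw_osc i hin _ (right_mem_Icc.mpr hle)) (hf'_osc i hin) (hf''_osc i hin) (hψ_osc i hin)
  have htelescope := Finset.sum_range_sub' (fun i => f (x (gridPoint t n i))) n
  have htime : (n : ℝ) * (t / n) = t := by field_simp
  simp only [Finset.sum_add_distrib, ← Finset.mul_sum, sum_integral_gridPoint ht hn hintegrand,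
    sum_integral_gridPoint ht hn hm.abs, gridPoint_succ_sub, htelescope, Finset.sum_const,
    Finset.card_range, nsmul_eq_mul, htime, gridPoint_zero, gridPoint_self t hn] at hcell
  linarith

theorem eventually_le_sum_logStep {f f' f'' x w m : ℝ → ℝ} {t K η : ℝ}
    (hf : ∀ y, HasDerivAt f (f' y) y) (hf' : ∀ y, HasDerivAt f' (f'' y) y)
    (hf'' : Continuous f'') (hK : ∀ y, |f'' y| ≤ K) (hη : 0 < η) (ht : 0 ≤ t)
    (hx : ContinuousOn x (Icc 0 t)) (hw : ContinuousOn w (Icc 0 t))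
    (hm : IntervalIntegrable m volume 0 t)
    (hxw : ∀ s ∈ Icc 0 t, x s = x 0 + (∫ u in 0..s, m u) + w s) :
    ∀ᶠ n : ℕ in atTop,
      -f (x t) + (∫ s in 0..t, (f' (x s) * m s + (f'' (x s) / 2 - f' (x s) ^ 2 / 2))) ≤
        -f (x 0) + (∑ i ∈ Finset.range n, logStep η (t / n) (-f' (x (gridPoint t n i)))
          (η - f'' (x (gridPoint t n i)) / 2) (w (gridPoint t n (i + 1)) - w (gridPoint t n i))) +
        η * (2 * t + 1) := by
  have hf'_cont : Continuous f' := continuous_iff_continuousAt.mpr fun y => (hf' y).continuousAt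
  have hf'x : ContinuousOn (fun s => f' (x s)) (Icc 0 t) := hf'_cont.comp_continuousOn hx
  have hf''x : ContinuousOn (fun s => f'' (x s)) (Icc 0 t) := hf''.comp_continuousOn hx
  have hK0 : 0 ≤ K := (abs_nonneg _).trans (hK 0)
  set V := ∫ s in 0..t, |m s|
  have hV : 0 ≤ V := intervalIntegral.integral_nonneg ht fun _ _ => abs_nonneg _
  obtain ⟨δ, hδ, hδη, hδ1, hδV⟩ :
      ∃ δ > 0, 2 * δ ≤ η ∧ δ ≤ 1 ∧ δ * ((5 + K) * V + t + 1) ≤ η := by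
    refine ⟨min (min (η / 2) 1) (η / ((5 + K) * V + t + 1)), by positivity, ?_,
      (min_le_left _ _).trans (min_le_right _ _),
      (le_div_iff₀ (by positivity)).mp (min_le_right _ _)⟩
    linarith [(min_le_left (min (η / 2) 1) (η / ((5 + K) * V + t + 1))).trans (min_le_left _ _)]
  filter_upwards [eventually_gridOscillationLE ht hx hδ, eventually_gridOscillationLE ht hw hδ,
    eventually_gridOscillationLE ht hf'x hδ, eventually_gridOscillationLE ht hf''x hδ,
    eventually_gridOscillationLE ht ((hf''x.div_const 2).sub ((hf'x.pow 2).div_const 2)) hδ,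
    eventually_ne_atTop 0] with n hx_osc hw_osc hf'_osc hf''_osc hψ_osc hn
  have hsum := le_sum_logStep_of_gridOscillationLE hf hf' hf'' hK hδη ht hn hx hm hxw hx_osc
    hw_osc hf'_osc hf''_osc hψ_osc
  have herror : δ * ((1 + 4 * δ + K) * V + t) ≤ η :=
    calc δ * ((1 + 4 * δ + K) * V + t) ≤ δ * ((5 + K) * V + t + 1) := by
          gcongr δ * ?_
          nlinarith [mul_le_mul_of_nonneg_right hδ1 hV]
      _ ≤ η := hδV
  linarith

end Discretisation

section PathIntegral

theorem measurable_intervalIntegral_comp_of_continuousOn {Ω E : Type*} [MeasurableSpace Ω]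
    [NormedAddCommGroup E] [NormedSpace ℝ E] [SecondCountableTopology E] [MeasurableSpace E]
    [BorelSpace E] {φ : ℝ → E} (hφ : Measurable φ) {X : ℝ → Ω → ℝ} {a b : ℝ} (hab : a ≤ b)
    (hX : ∀ s ∈ Icc a b, Measurable (X s))
    (hX_cont : ∀ ω, ContinuousOn (fun s => X s ω) (Icc a b)) :
    Measurable fun ω => ∫ s in a..b, φ (X s ω) := by
  have hproj : Measurable (Function.uncurry fun s => X (projIcc a b hab s)) :=
    measurable_uncurry_of_continuous_of_measurable
      (fun ω => (continuousOn_iff_continuous_domRestrict.mp (hX_cont ω)).comp continuous_projIcc)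
      fun s => hX _ (projIcc a b hab s).2
  have hcongr (ω : Ω) :
      ∫ s in Ioc a b, φ (X s ω) = ∫ s in Ioc a b, φ (X (projIcc a b hab s) ω) :=
    setIntegral_congr_fun measurableSet_Ioc fun s hs => by
      simp only [projIcc_of_mem hab (Ioc_subset_Icc_self hs)]
  simp only [intervalIntegral.integral_of_le hab, hcongr]
  exact (hφ.comp hproj).stronglyMeasurable.integral_prod_left'.measurable

theorem intervalIntegrable_comp_of_abs {φ x : ℝ → ℝ} (hφ : Measurable φ) {a b : ℝ}
    (hx : ContinuousOn x (uIcc a b)) (h : IntervalIntegrable (fun s => |φ (x s)|) volume a b) :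
    IntervalIntegrable (fun s => φ (x s)) volume a b :=
  h.mono_fun (hφ.comp_aemeasurable
    ((hx.mono uIoc_subset_uIcc).aemeasurable measurableSet_uIoc)).aestronglyMeasurable
    (.of_forall fun s => by simp)

end PathIntegral

section UnitDiffusion

variable {Ω : Type*} {mΩ : MeasurableSpace Ω} {ℱ : Filtration ℝ mΩ} {P : Measure Ω} {T : ℝ}
  {W X b : ℝ → Ω → ℝ}

/-- `W` is a standard Brownian motion relative to the filtration `ℱ` on the time interval
`[0, T]`; nothing is required of `W` outside this interval. -/
structure IsBrownianMotionOn (W : ℝ → Ω → ℝ) (ℱ : Filtration ℝ mΩ) (T : ℝ) (P : Measure Ω) :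
    Prop where
  zero : ∀ ω, W 0 ω = 0
  measurable : ∀ t ∈ Icc 0 T, Measurable[ℱ t] (W t)
  continuousOn : ∀ ω, ContinuousOn (fun t => W t ω) (Icc 0 T)
  map_sub : ∀ s t, 0 ≤ s → s ≤ t → t ≤ T →
    P.map (fun ω => W t ω - W s ω) = gaussianReal 0 (t - s).toNNReal
  indep_sub : ∀ s t, 0 ≤ s → s ≤ t → t ≤ T →
    Indep (MeasurableSpace.comap (fun ω => W t ω - W s ω) inferInstance) (ℱ s) P

/-- `X` is a continuous adapted process on `[0, T]` with `dX = b dt + dW`, where `W` is a Brownian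
motion relative to `ℱ` and the paths of the drift `b` are almost surely integrable. -/
structure IsUnitDiffusionOn (X b W : ℝ → Ω → ℝ) (ℱ : Filtration ℝ mΩ) (T : ℝ) (P : Measure Ω) :
    Prop where
  brownian : IsBrownianMotionOn W ℱ T P
  measurable : ∀ t ∈ Icc 0 T, Measurable[ℱ t] (X t)
  continuousOn : ∀ ω, ContinuousOn (fun t => X t ω) (Icc 0 T)
  intervalIntegrable : ∀ᵐ ω ∂P, IntervalIntegrable (fun t => b t ω) volume 0 T
  ae_eq : ∀ t ∈ Icc 0 T, ∀ᵐ ω ∂P, X t ω = X 0 ω + (∫ s in 0..t, b s ω) + W t ω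

theorem IsUnitDiffusionOn.ae_forall_eq (hX : IsUnitDiffusionOn X b W ℱ T P) :
    ∀ᵐ ω ∂P, ∀ t ∈ Icc 0 T, X t ω = X 0 ω + (∫ s in 0..t, b s ω) + W t ω := by
  rcases lt_or_ge T 0 with hT | hT
  · simp [Icc_eq_empty (not_le.mpr hT)]
  obtain ⟨S, hST, hS_countable, hS_dense⟩ :=
    (TopologicalSpace.IsSeparable.of_separableSpace (Icc 0 T)).exists_countable_dense_subset
  have hS : ∀ᵐ ω ∂P, ∀ t ∈ S, X t ω = X 0 ω + (∫ s in 0..t, b s ω) + W t ω :=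
    (ae_ball_iff hS_countable).mpr fun t ht => hX.ae_eq t (hST ht)
  filter_upwards [hS, hX.intervalIntegrable] with ω hω hb
  have hintegral : ContinuousOn (fun t => ∫ s in 0..t, b s ω) (Icc 0 T) := by
    rw [← uIcc_of_le hT]
    exact intervalIntegral.continuousOn_primitive_interval' hb left_mem_uIcc
  exact EqOn.of_subset_closure (s := S) hω (hX.continuousOn ω)
    ((continuousOn_const.add hintegral).add (hX.brownian.continuousOn ω)) hST hS_dense

/-- The product of the one-step weights `exp (logStep …)` along the partition of `[0, t]` into `n`
cells, with the coefficients `h` and `k` evaluated along the path of `X`. -/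
def gridWeight (η : ℝ) (h k : ℝ → ℝ) (X W : ℝ → Ω → ℝ) (t : ℝ) (n : ℕ) (ω : Ω) : ℝ≥0∞ :=
  ∏ i ∈ Finset.range n, ENNReal.ofReal (Real.exp (logStep η (t / n)
    (h (X (gridPoint t n i) ω)) (k (X (gridPoint t n i) ω))
    (W (gridPoint t n (i + 1)) ω - W (gridPoint t n i) ω)))

theorem gridWeight_eq_exp_sum (η : ℝ) (h k : ℝ → ℝ) (X W : ℝ → Ω → ℝ) (t : ℝ) (n : ℕ) (ω : Ω) :
    gridWeight η h k X W t n ω = ENNReal.ofReal (Real.exp (∑ i ∈ Finset.range n,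
      logStep η (t / n) (h (X (gridPoint t n i) ω)) (k (X (gridPoint t n i) ω))
        (W (gridPoint t n (i + 1)) ω - W (gridPoint t n i) ω))) := by
  rw [Real.exp_sum, ENNReal.ofReal_prod_of_nonneg fun i _ => Real.exp_nonneg _, gridWeight]

theorem measurable_gridWeight (η : ℝ) {h k : ℝ → ℝ} (hh : Measurable h) (hk : Measurable k)
    {t : ℝ} (ht : 0 ≤ t) (hX : ∀ s ∈ Icc 0 t, Measurable (X s))
    (hW : ∀ s ∈ Icc 0 t, Measurable (W s)) (n : ℕ) : Measurable (gridWeight η h k X W t n) := by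
  refine Finset.measurable_prod _ fun i hi => ?_
  have hi : i < n := Finset.mem_range.mp hi
  have hXi := hX _ (gridPoint_mem_Icc ht hi.le)
  have hWi := hW _ (gridPoint_mem_Icc ht hi.le)
  have hWi_succ := hW _ (gridPoint_mem_Icc ht (Nat.succ_le_of_lt hi))
  unfold logStep
  fun_prop

theorem IsBrownianMotionOn.eventually_lintegral_mul_gridWeight_le [IsFiniteMeasure P]
    (hW : IsBrownianMotionOn W ℱ T P) (hX : ∀ s ∈ Icc 0 T, Measurable[ℱ s] (X s))
    {h k : ℝ → ℝ} (hh : Measurable h) (hk : Measurable k) {B K : ℝ} (hB : ∀ x, |h x| ≤ B)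
    (hK : ∀ x, |k x| ≤ K) {η : ℝ} (hη : 0 < η) {G : Ω → ℝ≥0∞} (hG : Measurable[ℱ 0] G)
    {t : ℝ} (ht : t ∈ Icc 0 T) :
    ∀ᶠ n in atTop, ∫⁻ ω, G ω * gridWeight η h k X W t n ω ∂P ≤ ∫⁻ ω, G ω ∂P := by
  obtain ⟨v₀, hv₀, hgauss⟩ := exists_lintegral_exp_quadratic_sub_gaussianReal_le_one B K hη
  filter_upwards [(tendsto_const_div_atTop_nhds_zero_nat t).eventually (gt_mem_nhds hv₀)] with n hn
  let 𝒢 : Filtration ℕ mΩ :=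
    { seq := fun i => ℱ (gridPoint t n i)
      mono' := fun _ _ hij => ℱ.mono (monotone_gridPoint ht.1 n hij)
      le' := fun _ => ℱ.le _ }
  have hmem {i : ℕ} (hi : i ≤ n) : gridPoint t n i ∈ Icc 0 T :=
    Icc_subset_Icc_right ht.2 (gridPoint_mem_Icc ht.1 hi)
  have hmono (i : ℕ) := monotone_gridPoint ht.1 n i.le_succ
  refine lintegral_mul_prod_comp_le_of_indep (ℱ := 𝒢) (U := fun i => X (gridPoint t n i))
    (N := fun i ω => W (gridPoint t n (i + 1)) ω - W (gridPoint t n i) ω)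
    (Φ := fun z => ENNReal.ofReal (Real.exp (logStep η (t / n) (h z.1) (k z.1) z.2)))
    (hG.mono (ℱ.mono (gridPoint_zero t n).ge) le_rfl) (by unfold logStep; fun_prop)
    (fun i hi => hX _ (hmem hi.le)) (fun i hi => ?_)
    (fun i hi => hW.indep_sub _ _ (hmem hi.le).1 (hmono i) (hmem hi).2) fun i hi x => ?_
  · exact (hW.measurable _ (hmem hi)).sub
      ((hW.measurable _ (hmem hi.le)).mono (ℱ.mono (hmono i)) le_rfl)
  · rw [hW.map_sub _ _ (hmem hi.le).1 (hmono i) (hmem hi).2, gridPoint_succ_sub]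
    have hcoe : ((t / n).toNNReal : ℝ) = t / n :=
      Real.coe_toNNReal _ (div_nonneg ht.1 n.cast_nonneg)
    have hstep := hgauss (t / n).toNNReal (hcoe.trans_le hn.le) _ _ (hB x) (hK x)
    rwa [hcoe] at hstep

theorem lintegral_le_of_ae_le_liminf {g : ℕ → Ω → ℝ≥0∞} (hg : ∀ n, AEMeasurable (g n) P)
    {Z : Ω → ℝ≥0∞} (hZ : ∀ᵐ ω ∂P, Z ω ≤ liminf (fun n => g n ω) atTop) {c : ℝ≥0∞}
    (hc : ∀ᶠ n in atTop, ∫⁻ ω, g n ω ∂P ≤ c) : ∫⁻ ω, Z ω ∂P ≤ c :=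
  calc ∫⁻ ω, Z ω ∂P ≤ ∫⁻ ω, liminf (fun n => g n ω) atTop ∂P := lintegral_mono_ae hZ
    _ ≤ liminf (fun n => ∫⁻ ω, g n ω ∂P) atTop := lintegral_liminf_le' hg
    _ ≤ c := (liminf_le_liminf hc).trans_eq (liminf_const c)

theorem IsUnitDiffusionOn.measurable_of_mem (hX : IsUnitDiffusionOn X b W ℱ T P) {t : ℝ}
    (ht : t ∈ Icc 0 T) : Measurable (X t) :=
  (hX.measurable t ht).mono (ℱ.le t) le_rfl

theorem IsUnitDiffusionOn.continuousOn_uIcc (hX : IsUnitDiffusionOn X b W ℱ T P) {t : ℝ}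
    (ht : t ∈ Icc 0 T) (ω : Ω) : ContinuousOn (fun s => X s ω) (uIcc 0 t) :=
  (hX.continuousOn ω).mono (uIcc_of_le ht.1 ▸ Icc_subset_Icc_right ht.2)

theorem IsUnitDiffusionOn.ae_intervalIntegrable (hX : IsUnitDiffusionOn X b W ℱ T P)
    {t : ℝ} (ht : t ∈ Icc 0 T) : ∀ᵐ ω ∂P, IntervalIntegrable (fun s => b s ω) volume 0 t :=
  hX.intervalIntegrable.mono fun _ hω =>
    hω.mono_set (uIcc_subset_uIcc_left (uIcc_of_le (ht.1.trans ht.2) ▸ ht))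

theorem IsUnitDiffusionOn.measurable_integral_comp (hX : IsUnitDiffusionOn X b W ℱ T P)
    {φ : ℝ → ℝ} (hφ : Measurable φ) {t : ℝ} (ht : t ∈ Icc 0 T) :
    Measurable fun ω => ∫ s in 0..t, φ (X s ω) :=
  have hsub : Icc 0 t ⊆ Icc 0 T := Icc_subset_Icc_right ht.2
  measurable_intervalIntegral_comp_of_continuousOn hφ ht.1
    (fun _ hs => hX.measurable_of_mem (hsub hs)) fun ω => (hX.continuousOn ω).mono hsub

theorem IsUnitDiffusionOn.ae_eventually_exp_le_gridWeight (hX : IsUnitDiffusionOn X b W ℱ T P)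
    {f f' f'' : ℝ → ℝ} (hf : ∀ y, HasDerivAt f (f' y) y) (hf' : ∀ y, HasDerivAt f' (f'' y) y)
    (hf'' : Continuous f'') {K : ℝ} (hK : ∀ y, |f'' y| ≤ K) {t : ℝ} (ht : t ∈ Icc 0 T)
    {η : ℝ} (hη : 0 < η) :
    ∀ᵐ ω ∂P, ∀ᶠ n in atTop,
      ENNReal.ofReal (Real.exp (-f (X t ω) + ∫ s in 0..t,
          (f' (X s ω) * b s ω + (f'' (X s ω) / 2 - f' (X s ω) ^ 2 / 2)))) ≤
        ENNReal.ofReal (Real.exp (η * (2 * t + 1))) * (ENNReal.ofReal (Real.exp (-f (X 0 ω))) *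
          gridWeight η (fun y => -f' y) (fun y => η - f'' y / 2) X W t n ω) := by
  have hsub : Icc 0 t ⊆ Icc 0 T := Icc_subset_Icc_right ht.2
  filter_upwards [hX.ae_forall_eq, hX.ae_intervalIntegrable ht] with ω hω hb
  filter_upwards [eventually_le_sum_logStep hf hf' hf'' hK hη ht.1 ((hX.continuousOn ω).mono hsub)
    ((hX.brownian.continuousOn ω).mono hsub) hb fun s hs => hω s (hsub hs)] with n hn
  rw [gridWeight_eq_exp_sum, ← ENNReal.ofReal_mul (Real.exp_nonneg _), ← Real.exp_add,
    ← ENNReal.ofReal_mul (Real.exp_nonneg _), ← Real.exp_add]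
  exact ENNReal.ofReal_le_ofReal (Real.exp_le_exp.mpr (by linarith))

theorem IsUnitDiffusionOn.lintegral_exp_le_mul_exp [IsFiniteMeasure P]
    (hX : IsUnitDiffusionOn X b W ℱ T P) {f f' f'' : ℝ → ℝ} (hf : ∀ y, HasDerivAt f (f' y) y)
    (hf' : ∀ y, HasDerivAt f' (f'' y) y) (hf'' : Continuous f'') {B K : ℝ}
    (hB : ∀ y, |f' y| ≤ B) (hK : ∀ y, |f'' y| ≤ K) {t : ℝ} (ht : t ∈ Icc 0 T) {η : ℝ}
    (hη : 0 < η) :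
    ∫⁻ ω, ENNReal.ofReal (Real.exp (-f (X t ω) + ∫ s in 0..t,
        (f' (X s ω) * b s ω + (f'' (X s ω) / 2 - f' (X s ω) ^ 2 / 2)))) ∂P ≤
      ENNReal.ofReal (Real.exp (η * (2 * t + 1))) *
        ∫⁻ ω, ENNReal.ofReal (Real.exp (-f (X 0 ω))) ∂P := by
  have hf_meas : Measurable f :=
    (continuous_iff_continuousAt.mpr fun y => (hf y).continuousAt).measurable
  have hf'_meas : Measurable f' :=
    (continuous_iff_continuousAt.mpr fun y => (hf' y).continuousAt).measurable
  have hk_meas : Measurable fun y => η - f'' y / 2 := by fun_prop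
  have hX0 : Measurable[ℱ 0] (X 0) := hX.measurable 0 ⟨le_rfl, ht.1.trans ht.2⟩
  have hG : Measurable[ℱ 0] fun ω => ENNReal.ofReal (Real.exp (-f (X 0 ω))) :=
    (ENNReal.measurable_ofReal.comp (Real.measurable_exp.comp hf_meas.neg)).comp hX0
  have hsub : Icc 0 t ⊆ Icc 0 T := Icc_subset_Icc_right ht.2
  have hweight (n : ℕ) := (hG.mono (ℱ.le 0) le_rfl).mul <|
    measurable_gridWeight η hf'_meas.neg hk_meas ht.1
      (fun s hs => hX.measurable_of_mem (hsub hs))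
      (fun s hs => (hX.brownian.measurable s (hsub hs)).mono (ℱ.le s) le_rfl) n
  have hk (y : ℝ) : |η - f'' y / 2| ≤ η + K / 2 := by
    have := abs_le.mp (hK y)
    exact abs_le.mpr ⟨by linarith, by linarith⟩
  refine lintegral_le_of_ae_le_liminf (fun n => ((hweight n).const_mul _).aemeasurable)
    ((hX.ae_eventually_exp_le_gridWeight hf hf' hf'' hK ht hη).mono fun ω hω =>
      le_liminf_of_le (by isBoundedDefault) hω) ?_
  filter_upwards [hX.brownian.eventually_lintegral_mul_gridWeight_le hX.measurable hf'_meas.neg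
    hk_meas (fun y => (abs_neg (f' y)).trans_le (hB y)) hk hη hG ht] with n hn
  rw [lintegral_const_mul _ (hweight n)]
  exact mul_le_mul' le_rfl hn

-- By Itô's formula the left-hand integrand is `exp (-f (X 0))` times the stochastic exponential
-- of `-∫ f' (X) dW`, a supermartingale.
theorem IsUnitDiffusionOn.lintegral_exp_le [IsFiniteMeasure P]
    (hX : IsUnitDiffusionOn X b W ℱ T P) {f f' f'' : ℝ → ℝ} (hf : ∀ y, HasDerivAt f (f' y) y)
    (hf' : ∀ y, HasDerivAt f' (f'' y) y) (hf'' : Continuous f'') {B K : ℝ}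
    (hB : ∀ y, |f' y| ≤ B) (hK : ∀ y, |f'' y| ≤ K) {t : ℝ} (ht : t ∈ Icc 0 T) :
    ∫⁻ ω, ENNReal.ofReal (Real.exp (-f (X t ω) + ∫ s in 0..t,
        (f' (X s ω) * b s ω + (f'' (X s ω) / 2 - f' (X s ω) ^ 2 / 2)))) ∂P ≤
      ∫⁻ ω, ENNReal.ofReal (Real.exp (-f (X 0 ω))) ∂P := by
  have hexp : Tendsto (fun η => ENNReal.ofReal (Real.exp (η * (2 * t + 1)))) (nhdsWithin 0 (Ioi 0))
      (nhds 1) := by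
    have : Continuous fun η => ENNReal.ofReal (Real.exp (η * (2 * t + 1))) :=
      ENNReal.continuous_ofReal.comp (by fun_prop)
    simpa using (this.tendsto 0).mono_left nhdsWithin_le_nhds
  have hlimit := ENNReal.Tendsto.mul_const (b := ∫⁻ ω, ENNReal.ofReal (Real.exp (-f (X 0 ω))) ∂P)
    hexp (.inl one_ne_zero)
  rw [one_mul] at hlimit
  exact ge_of_tendsto hlimit (eventually_mem_nhdsWithin.mono fun η hη =>
    hX.lintegral_exp_le_mul_exp hf hf' hf'' hB hK ht hη)

end UnitDiffusion

section SmoothAbs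

/-- The smooth approximation `√(x ^ 2 + δ ^ 2)` of `|x|`; it decreases to `|x|` as `δ` decreases
to `0`. -/
def smoothAbs (δ x : ℝ) : ℝ := √(x ^ 2 + δ ^ 2)

theorem sq_smoothAbs (δ x : ℝ) : smoothAbs δ x ^ 2 = x ^ 2 + δ ^ 2 := Real.sq_sqrt (by positivity)

theorem abs_le_smoothAbs (δ x : ℝ) : |x| ≤ smoothAbs δ x :=
  Real.abs_le_sqrt (le_add_of_nonneg_right (sq_nonneg δ))

theorem le_smoothAbs (δ x : ℝ) : δ ≤ smoothAbs δ x :=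
  Real.le_sqrt_of_sq_le (le_add_of_nonneg_left (sq_nonneg x))

theorem smoothAbs_pos {δ : ℝ} (hδ : 0 < δ) (x : ℝ) : 0 < smoothAbs δ x :=
  hδ.trans_le (le_smoothAbs δ x)

theorem smoothAbs_le_smoothAbs {δ δ' : ℝ} (hδ : 0 ≤ δ) (h : δ ≤ δ') (x : ℝ) :
    smoothAbs δ x ≤ smoothAbs δ' x := by
  unfold smoothAbs
  gcongr

theorem smoothAbs_zero_left {x : ℝ} (hx : 0 ≤ x) : smoothAbs 0 x = x := by
  simp [smoothAbs, hx]

theorem smoothAbs_zero_right {δ : ℝ} (hδ : 0 ≤ δ) : smoothAbs δ 0 = δ := by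
  simp [smoothAbs, hδ]

theorem continuous_smoothAbs_left (x : ℝ) : Continuous fun δ => smoothAbs δ x := by
  unfold smoothAbs
  fun_prop

theorem continuous_smoothAbs (δ : ℝ) : Continuous (smoothAbs δ) := by
  unfold smoothAbs
  fun_prop

theorem continuous_smoothAbs_rpow {δ : ℝ} (hδ : 0 < δ) (r : ℝ) :
    Continuous fun x => smoothAbs δ x ^ r :=
  (continuous_smoothAbs δ).rpow_const fun x => .inl (smoothAbs_pos hδ x).ne'

theorem hasDerivAt_smoothAbs_rpow {δ : ℝ} (hδ : 0 < δ) (r x : ℝ) :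
    HasDerivAt (fun x => smoothAbs δ x ^ r) (r * (x * smoothAbs δ x ^ (r - 2))) x := by
  have hy := smoothAbs_pos hδ x
  have hsq : HasDerivAt (fun x => x ^ 2 + δ ^ 2) (2 * x) x := by
    simpa using (hasDerivAt_pow 2 x).add_const (δ ^ 2)
  refine ((hsq.sqrt (Real.sqrt_pos.mp hy).ne').rpow_const (.inl hy.ne')).congr_deriv ?_
  change 2 * x / (2 * smoothAbs δ x) * r * smoothAbs δ x ^ (r - 1) = _
  rw [show r - 1 = r - 2 + 1 by ring, Real.rpow_add_one hy.ne']
  field_simp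

theorem hasDerivAt_mul_smoothAbs_rpow {δ : ℝ} (hδ : 0 < δ) (r x : ℝ) :
    HasDerivAt (fun x => x * smoothAbs δ x ^ r)
      (smoothAbs δ x ^ r + r * (x ^ 2 * smoothAbs δ x ^ (r - 2))) x :=
  ((hasDerivAt_id' x).mul (hasDerivAt_smoothAbs_rpow hδ r x)).congr_deriv (by ring)

theorem smoothAbs_rpow_le {δ : ℝ} (hδ : 0 < δ) {r : ℝ} (hr : r ≤ 0) (x : ℝ) :
    smoothAbs δ x ^ r ≤ δ ^ r :=
  Real.rpow_le_rpow_of_nonpos hδ (le_smoothAbs δ x) hr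

theorem abs_mul_smoothAbs_rpow_le {δ : ℝ} (hδ : 0 < δ) (r x : ℝ) :
    |x * smoothAbs δ x ^ r| ≤ smoothAbs δ x ^ (r + 1) := by
  have hy := smoothAbs_pos hδ x
  rw [abs_mul, abs_of_nonneg (Real.rpow_nonneg hy.le r), Real.rpow_add_one hy.ne', mul_comm]
  exact mul_le_mul_of_nonneg_left (abs_le_smoothAbs δ x) (by positivity)

theorem sq_mul_smoothAbs_rpow_le {δ : ℝ} (hδ : 0 < δ) (r x : ℝ) :
    x ^ 2 * smoothAbs δ x ^ (r - 2) ≤ smoothAbs δ x ^ r := by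
  have hy := smoothAbs_pos hδ x
  calc x ^ 2 * smoothAbs δ x ^ (r - 2) ≤ smoothAbs δ x ^ 2 * smoothAbs δ x ^ (r - 2) := by
        gcongr ?_ * _
        exact (le_add_of_nonneg_right (sq_nonneg δ)).trans_eq (sq_smoothAbs δ x).symm
    _ = smoothAbs δ x ^ r := by
        rw [← Real.rpow_two, ← Real.rpow_add hy, add_sub_cancel]

theorem abs_deriv_mul_smoothAbs_rpow_le {δ : ℝ} (hδ : 0 < δ) (r x : ℝ) :
    |smoothAbs δ x ^ r + r * (x ^ 2 * smoothAbs δ x ^ (r - 2))| ≤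
      (1 + |r|) * smoothAbs δ x ^ r := by
  have hy := smoothAbs_pos hδ x
  refine (abs_add_le _ _).trans ?_
  rw [abs_mul, abs_of_nonneg (by positivity : 0 ≤ smoothAbs δ x ^ r),
    abs_of_nonneg (by positivity : 0 ≤ x ^ 2 * smoothAbs δ x ^ (r - 2)), one_add_mul]
  gcongr
  exact sq_mul_smoothAbs_rpow_le hδ r x

end SmoothAbs

section ExpCompensator

/-- The coefficient `f' μ + f'' / 2 - f' ^ 2 / 2` for `f = a * smoothAbs δ ^ r`. If
`dX = μ(X) dt + dW`, then `exp (-f (X t) + ∫ s in 0..t, expCompensator μ δ a r (X s))` is a local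
martingale. -/
def expCompensator (μ : ℝ → ℝ) (δ a r x : ℝ) : ℝ :=
  a * r * (x * smoothAbs δ x ^ (r - 2)) * μ x +
    (a * r * (smoothAbs δ x ^ (r - 2) + (r - 2) * (x ^ 2 * smoothAbs δ x ^ (r - 2 - 2))) / 2 -
      (a * r * (x * smoothAbs δ x ^ (r - 2))) ^ 2 / 2)

theorem measurable_expCompensator {μ : ℝ → ℝ} (hμ : Measurable μ) (δ a r : ℝ) :
    Measurable (expCompensator μ δ a r) := by
  have := (continuous_smoothAbs δ).measurable
  unfold expCompensator
  fun_prop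

theorem abs_deriv_const_mul_smoothAbs_rpow_le {δ : ℝ} (hδ : 0 < δ) (a : ℝ) {r : ℝ} (hr : r ≤ 1)
    (x : ℝ) :
    |a * r * (x * smoothAbs δ x ^ (r - 2))| ≤ |a * r| * δ ^ (r - 1) := by
  rw [abs_mul]
  gcongr
  calc |x * smoothAbs δ x ^ (r - 2)| ≤ smoothAbs δ x ^ (r - 2 + 1) :=
        abs_mul_smoothAbs_rpow_le hδ _ x
    _ ≤ δ ^ (r - 2 + 1) := smoothAbs_rpow_le hδ (by linarith) x
    _ = δ ^ (r - 1) := by ring_nf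

theorem abs_second_deriv_const_mul_smoothAbs_rpow_le {δ : ℝ} (hδ : 0 < δ) (a : ℝ) {r : ℝ}
    (hr : r ≤ 2) (x : ℝ) :
    |a * r * (smoothAbs δ x ^ (r - 2) + (r - 2) * (x ^ 2 * smoothAbs δ x ^ (r - 2 - 2)))| ≤
      |a * r| * ((1 + |r - 2|) * δ ^ (r - 2)) := by
  rw [abs_mul]
  gcongr |a * r| * ?_
  exact (abs_deriv_mul_smoothAbs_rpow_le hδ _ x).trans
    (mul_le_mul_of_nonneg_left (smoothAbs_rpow_le hδ (by linarith) x) (by positivity))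

theorem abs_expCompensator_le (μ : ℝ → ℝ) {δ : ℝ} (hδ : 0 < δ) (a : ℝ) {r : ℝ} (hr : r ≤ 1)
    (x : ℝ) :
    |expCompensator μ δ a r x| ≤ |a * r| * δ ^ (r - 1) * |μ x| +
      (|a * r| * ((1 + |r - 2|) * δ ^ (r - 2)) / 2 + (|a * r| * δ ^ (r - 1)) ^ 2 / 2) := by
  have hfirst := abs_deriv_const_mul_smoothAbs_rpow_le hδ a hr x
  have hsecond := abs_second_deriv_const_mul_smoothAbs_rpow_le hδ a (hr.trans one_le_two) x
  refine (abs_add_le _ _).trans (add_le_add ?_ ((abs_sub _ _).trans (add_le_add ?_ ?_)))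
  · rw [abs_mul]
    gcongr
  · rw [abs_div, abs_two]
    gcongr
  · rw [abs_div, abs_two, abs_pow]
    gcongr

theorem intervalIntegrable_expCompensator {μ : ℝ → ℝ} (hμ : Measurable μ) {δ : ℝ} (hδ : 0 < δ)
    (a : ℝ) {r : ℝ} (hr : r ≤ 1) {x : ℝ → ℝ} {t : ℝ} (hx : ContinuousOn x (uIcc 0 t))
    (hμx : IntervalIntegrable (fun s => μ (x s)) volume 0 t) :
    IntervalIntegrable (fun s => expCompensator μ δ a r (x s)) volume 0 t := by
  have hx_meas : AEMeasurable x (volume.restrict (uIoc 0 t)) :=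
    (hx.mono uIoc_subset_uIcc).aemeasurable measurableSet_uIoc
  refine ((hμx.abs.const_mul (|a * r| * δ ^ (r - 1))).add intervalIntegrable_const).mono_fun'
    ((measurable_expCompensator hμ δ a r).comp_aemeasurable hx_meas).aestronglyMeasurable
    (.of_forall fun s => abs_expCompensator_le μ hδ a hr (x s))

theorem tendsto_expCompensator_self_one (μ : ℝ → ℝ) (x : ℝ) :
    Tendsto (fun δ => expCompensator μ δ δ 1 x) (nhdsWithin 0 (Ioi 0))
      (nhds (if x = 0 then 1 / 2 else 0)) := by
  split_ifs with hx
  · subst hx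
    refine tendsto_const_nhds.congr' (eventually_mem_nhdsWithin.mono fun δ hδ => ?_)
    have hδ : 0 < δ := hδ
    norm_num [expCompensator, smoothAbs_zero_right hδ.le, Real.rpow_neg_one, hδ.ne']
  · have hy : 0 < smoothAbs 0 x := (abs_pos.mpr hx).trans_le (abs_le_smoothAbs 0 x)
    have hpow (r : ℝ) : ContinuousAt (fun δ => smoothAbs δ x ^ r) 0 :=
      (continuous_smoothAbs_left x).continuousAt.rpow_const (.inl hy.ne')
    have hcont : ContinuousAt (fun δ => expCompensator μ δ δ 1 x) 0 := by
      have := hpow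
      unfold expCompensator
      fun_prop (disch := assumption)
    simpa [expCompensator] using hcont.tendsto.mono_left nhdsWithin_le_nhds

theorem IsUnitDiffusionOn.lintegral_exp_expCompensator_le {Ω : Type*} {mΩ : MeasurableSpace Ω}
    {ℱ : Filtration ℝ mΩ} {P : Measure Ω} [IsFiniteMeasure P] {T : ℝ} {W X : ℝ → Ω → ℝ}
    {μ : ℝ → ℝ} (hX : IsUnitDiffusionOn X (fun t ω => μ (X t ω)) W ℱ T P) {δ : ℝ} (hδ : 0 < δ)
    (a : ℝ) {r : ℝ} (hr : r ≤ 1) {t : ℝ} (ht : t ∈ Icc 0 T) :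
    ∫⁻ ω, ENNReal.ofReal (Real.exp (-(a * smoothAbs δ (X t ω) ^ r) +
        ∫ s in 0..t, expCompensator μ δ a r (X s ω))) ∂P ≤
      ∫⁻ ω, ENNReal.ofReal (Real.exp (-(a * smoothAbs δ (X 0 ω) ^ r))) ∂P := by
  have hpow (q : ℝ) := continuous_smoothAbs_rpow hδ q
  refine hX.lintegral_exp_le
    (fun x => ((hasDerivAt_smoothAbs_rpow hδ r x).const_mul a).congr_deriv (mul_assoc a r _).symm)
    (fun x => (hasDerivAt_mul_smoothAbs_rpow hδ (r - 2) x).const_mul (a * r))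
    (by fun_prop) (abs_deriv_const_mul_smoothAbs_rpow_le hδ a hr)
    (abs_second_deriv_const_mul_smoothAbs_rpow_le hδ a (hr.trans one_le_two)) ht

end ExpCompensator

section ZeroSet

variable {Ω : Type*} {mΩ : MeasurableSpace Ω} {ℱ : Filtration ℝ mΩ} {P : Measure Ω} {T : ℝ}
  {W X : ℝ → Ω → ℝ} {μ : ℝ → ℝ}

theorem tendsto_integral_expCompensator_self_one (hμ : Measurable μ) {x : ℝ → ℝ} {t : ℝ}
    (hx : ContinuousOn x (uIcc 0 t)) (hμx : IntervalIntegrable (fun s => μ (x s)) volume 0 t) :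
    Tendsto (fun δ => ∫ s in 0..t, expCompensator μ δ δ 1 (x s)) (nhdsWithin 0 (Ioi 0))
      (nhds (∫ s in 0..t, if x s = 0 then 1 / 2 else 0)) := by
  have hbound : ∀ᶠ δ in nhdsWithin 0 (Ioi (0 : ℝ)), δ ∈ Ioo (0 : ℝ) 1 :=
    Ioo_mem_nhdsGT one_pos
  refine intervalIntegral.tendsto_integral_filter_of_dominated_convergence
    (fun s => |μ (x s)| + (1 + 1 / 2)) ?_ ?_ (hμx.abs.add intervalIntegrable_const)
    (.of_forall fun s _ => tendsto_expCompensator_self_one μ (x s))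
  · exact hbound.mono fun δ hδ =>
      (intervalIntegrable_expCompensator hμ hδ.1 δ le_rfl hx hμx).def'.aestronglyMeasurable
  · refine hbound.mono fun δ hδ => .of_forall fun s _ => ?_
    refine (abs_expCompensator_le μ hδ.1 δ le_rfl (x s)).trans ?_
    have hinv : δ * δ ^ (1 - 2 : ℝ) = 1 := by
      rw [show (1 - 2 : ℝ) = -1 by norm_num, Real.rpow_neg_one, mul_inv_cancel₀ hδ.1.ne']
    have hsq : δ ^ 2 ≤ 1 := pow_le_one₀ hδ.1.le hδ.2.le
    have hmul : δ * |μ (x s)| ≤ |μ (x s)| := mul_le_of_le_one_left (abs_nonneg _) hδ.2.le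
    norm_num [abs_of_pos hδ.1] at hinv ⊢
    linarith

theorem IsUnitDiffusionOn.measurable_exp_expCompensator {b : ℝ → Ω → ℝ}
    (hX : IsUnitDiffusionOn X b W ℱ T P) (hμ : Measurable μ) (δ a r : ℝ) {t : ℝ}
    (ht : t ∈ Icc 0 T) :
    Measurable fun ω => ENNReal.ofReal (Real.exp (-(a * smoothAbs δ (X t ω) ^ r) +
      ∫ s in 0..t, expCompensator μ δ a r (X s ω))) := by
  have := (continuous_smoothAbs δ).measurable
  have := hX.measurable_of_mem ht
  have := hX.measurable_integral_comp (measurable_expCompensator hμ δ a r) ht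
  fun_prop

theorem IsUnitDiffusionOn.lintegral_exp_zeroSet_le_one [IsProbabilityMeasure P]
    (hX : IsUnitDiffusionOn X (fun t ω => μ (X t ω)) W ℱ T P) (hμ : Measurable μ) {t : ℝ}
    (ht : t ∈ Icc 0 T) :
    ∫⁻ ω, ENNReal.ofReal (Real.exp (∫ s in 0..t, if X s ω = 0 then 1 / 2 else 0)) ∂P ≤ 1 := by
  obtain ⟨δ, -, hδ, hδ_lim⟩ := exists_seq_strictAnti_tendsto (0 : ℝ)
  have hδ_lim' : Tendsto δ atTop (nhdsWithin 0 (Ioi 0)) :=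
    tendsto_nhdsWithin_iff.mpr ⟨hδ_lim, .of_forall hδ⟩
  refine lintegral_le_of_ae_le_liminf
    (fun n => (hX.measurable_exp_expCompensator hμ (δ n) (δ n) 1 ht).aemeasurable) ?_
    (.of_forall fun n => (hX.lintegral_exp_expCompensator_le (hδ n) (δ n) le_rfl ht).trans ?_)
  · filter_upwards [hX.ae_intervalIntegrable ht] with ω hω
    have hterm : Tendsto (fun δ => -(δ * smoothAbs δ (X t ω) ^ (1 : ℝ))) (nhds 0) (nhds 0) := by
      have := continuous_smoothAbs_left (X t ω)
      have hcont : Continuous fun δ => -(δ * smoothAbs δ (X t ω) ^ (1 : ℝ)) := by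
        simp only [Real.rpow_one]
        fun_prop
      simpa using hcont.tendsto 0
    have hlimit := (hterm.comp hδ_lim).add
      ((tendsto_integral_expCompensator_self_one hμ (hX.continuousOn_uIcc ht ω) hω).comp hδ_lim')
    rw [zero_add] at hlimit
    exact (ENNReal.tendsto_ofReal (hlimit.rexp)).liminf_eq.ge
  · refine (lintegral_mono (g := 1) fun ω => ?_).trans_eq (by simp)
    have : 0 ≤ δ n * smoothAbs (δ n) (X 0 ω) ^ (1 : ℝ) :=
      mul_nonneg (hδ n).le (Real.rpow_nonneg (smoothAbs_pos (hδ n) _).le _)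
    simpa using this

theorem IsUnitDiffusionOn.ae_ae_ne_zero [IsProbabilityMeasure P]
    (hX : IsUnitDiffusionOn X (fun t ω => μ (X t ω)) W ℱ T P) (hμ : Measurable μ) {t : ℝ}
    (ht : t ∈ Icc 0 T) : ∀ᵐ ω ∂P, ∀ᵐ s ∂volume.restrict (Ioc 0 t), X s ω ≠ 0 := by
  have hφ : Measurable fun x : ℝ => if x = 0 then (1 / 2 : ℝ) else 0 :=
    Measurable.ite (measurableSet_singleton 0) measurable_const measurable_const
  have hφ_nonneg (x : ℝ) : 0 ≤ if x = 0 then (1 / 2 : ℝ) else 0 := by positivity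
  have hexp : ∀ᵐ ω ∂P,
      1 = ENNReal.ofReal (Real.exp (∫ s in 0..t, if X s ω = 0 then 1 / 2 else 0)) := by
    refine ae_eq_of_ae_le_of_lintegral_le (.of_forall fun ω => ?_) (by simp)
      (Real.measurable_exp.comp (hX.measurable_integral_comp hφ ht)).ennreal_ofReal.aemeasurable
      (by simpa using hX.lintegral_exp_zeroSet_le_one hμ ht)
    simpa using intervalIntegral.integral_nonneg ht.1 fun s _ => hφ_nonneg (X s ω)
  filter_upwards [hexp] with ω hω
  have hpath : AEMeasurable (fun s => X s ω) (volume.restrict (Ioc 0 t)) :=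
    ((hX.continuousOn ω).mono (Ioc_subset_Icc_self.trans (Icc_subset_Icc_right ht.2))).aemeasurable
      measurableSet_Ioc
  have hintegrable : Integrable (fun s => if X s ω = 0 then (1 / 2 : ℝ) else 0)
      (volume.restrict (Ioc 0 t)) :=
    .of_bound (hφ.comp_aemeasurable hpath).aestronglyMeasurable (1 / 2)
      (.of_forall fun s => by split_ifs <;> norm_num)
  rw [eq_comm, ENNReal.ofReal_eq_one, Real.exp_eq_one_iff, intervalIntegral.integral_of_le ht.1,
    integral_eq_zero_iff_of_nonneg (fun s => hφ_nonneg (X s ω)) hintegrable] at hω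
  filter_upwards [hω] with s hs hzero
  simp [hzero] at hs

end ZeroSet

section InverseMoments

theorem expENN_eq_exp (x : ℝ≥0∞) : expENN x = EReal.exp x := by
  rcases eq_or_ne x ⊤ with rfl | hx
  · simp [expENN]
  · lift x to ℝ≥0 using hx
    rw [expENN, if_neg ENNReal.coe_ne_top, ENNReal.coe_toReal, EReal.coe_nnreal_eq_coe_real,
      EReal.exp_coe]

theorem continuous_expENN : Continuous expENN := by
  simp only [funext expENN_eq_exp]
  exact EReal.expHomeomorph.continuous.comp continuous_coe_ennreal_ereal

theorem expENN_ofReal {x : ℝ} (hx : 0 ≤ x) :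
    expENN (ENNReal.ofReal x) = ENNReal.ofReal (Real.exp x) := by
  rw [expENN, if_neg ENNReal.ofReal_ne_top, ENNReal.toReal_ofReal hx]

theorem tendsto_lintegral_ofReal_smoothAbs_rpow_neg {α : Type*} [MeasurableSpace α]
    {ν : Measure α} {f : α → ℝ} (hf : AEMeasurable f ν) (hf_nonneg : ∀ a, 0 ≤ f a) {p : ℝ}
    (hp : 0 ≤ p) {δ : ℕ → ℝ} (hδ : ∀ n, 0 ≤ δ n) (hδ_anti : Antitone δ)
    (hδ_lim : Tendsto δ atTop (nhds 0)) :
    Tendsto (fun n => ∫⁻ a, ENNReal.ofReal (smoothAbs (δ n) (f a)) ^ (-p) ∂ν) atTop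
      (nhds (∫⁻ a, ENNReal.ofReal (f a) ^ (-p) ∂ν)) := by
  refine lintegral_tendsto_of_tendsto_of_monotone (fun n => ?_)
    (.of_forall fun a m n hmn => ?_) (.of_forall fun a => ?_)
  · exact ((continuous_smoothAbs (δ n)).measurable.comp_aemeasurable hf).ennreal_ofReal.pow_const _
  · simp only [ENNReal.rpow_neg, ENNReal.inv_le_inv]
    gcongr
    exact smoothAbs_le_smoothAbs (hδ n) (hδ_anti hmn) (f a)
  · have hlim := ((continuous_smoothAbs_left (f a)).tendsto 0).comp hδ_lim
    rw [smoothAbs_zero_left (hf_nonneg a)] at hlim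
    exact (ENNReal.continuous_rpow_const.tendsto _).comp (ENNReal.tendsto_ofReal hlim)

theorem le_integral_expCompensator {μ : ℝ → ℝ} (hμ : Measurable μ) {δ κ k C a p q r : ℝ}
    (hδ : 0 < δ) (hq : 0 ≤ q) (hr : r ≤ 1)
    (h : ∀ y, 0 < y → κ * smoothAbs δ y ^ (-p) - k * y ^ q - C ≤ expCompensator μ δ a r y)
    {x : ℝ → ℝ} {t : ℝ} (ht : 0 ≤ t) (hx : ContinuousOn x (uIcc 0 t))
    (hx_pos : ∀ᵐ s ∂volume.restrict (Ioc 0 t), 0 < x s)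
    (hμx : IntervalIntegrable (fun s => μ (x s)) volume 0 t) :
    κ * (∫ s in 0..t, smoothAbs δ (x s) ^ (-p)) - k * (∫ s in 0..t, x s ^ q) - C * t ≤
      ∫ s in 0..t, expCompensator μ δ a r (x s) := by
  have hsmooth : IntervalIntegrable (fun s => κ * smoothAbs δ (x s) ^ (-p)) volume 0 t :=
    (((continuous_smoothAbs_rpow hδ (-p)).comp_continuousOn hx).const_smul κ).intervalIntegrable
  have hpow : IntervalIntegrable (fun s => k * x s ^ q) volume 0 t :=
    ((hx.rpow_const fun _ _ => .inr hq).const_smul k).intervalIntegrable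
  have hcomp := intervalIntegrable_expCompensator hμ hδ a hr hx hμx
  calc κ * (∫ s in 0..t, smoothAbs δ (x s) ^ (-p)) - k * (∫ s in 0..t, x s ^ q) - C * t
      = ∫ s in 0..t, (κ * smoothAbs δ (x s) ^ (-p) - k * x s ^ q - C) := by
        rw [intervalIntegral.integral_sub (hsmooth.sub hpow) intervalIntegrable_const,
          intervalIntegral.integral_sub hsmooth hpow, intervalIntegral.integral_const_mul,
          intervalIntegral.integral_const_mul, intervalIntegral.integral_const, smul_eq_mul,
          sub_zero, mul_comm C]
    _ ≤ ∫ s in 0..t, expCompensator μ δ a r (x s) := by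
        rw [intervalIntegral.integral_of_le ht, intervalIntegral.integral_of_le ht]
        exact integral_mono_ae ((hsmooth.sub hpow).sub intervalIntegrable_const).1 hcomp.1
          (hx_pos.mono fun s hs => h (x s) hs)

theorem lintegral_ofReal_smoothAbs_rpow {δ : ℝ} (hδ : 0 < δ) (r : ℝ) {x : ℝ → ℝ} {t : ℝ}
    (ht : 0 ≤ t) (hx : ContinuousOn x (uIcc 0 t)) :
    ∫⁻ s in Ioc 0 t, ENNReal.ofReal (smoothAbs δ (x s)) ^ r =
      ENNReal.ofReal (∫ s in 0..t, smoothAbs δ (x s) ^ r) := by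
  have hintegrable : IntervalIntegrable (fun s => smoothAbs δ (x s) ^ r) volume 0 t :=
    ((continuous_smoothAbs_rpow hδ r).comp_continuousOn hx).intervalIntegrable
  rw [intervalIntegral.integral_of_le ht, ofReal_integral_eq_lintegral_ofReal hintegrable.1
    (.of_forall fun s => Real.rpow_nonneg (smoothAbs_pos hδ _).le _)]
  exact lintegral_congr fun s => ENNReal.ofReal_rpow_of_pos (smoothAbs_pos hδ _)

theorem expENN_mul_exp_le_of_le_expCompensator {μ : ℝ → ℝ} (hμ : Measurable μ)
    {δ κ k C a p q r : ℝ} (hδ : 0 < δ) (hκ : 0 ≤ κ) (hq : 0 ≤ q) (hr : r ≤ 1)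
    (h : ∀ y, 0 < y → κ * smoothAbs δ y ^ (-p) - k * y ^ q - C ≤ expCompensator μ δ a r y)
    {x : ℝ → ℝ} {t : ℝ} (ht : 0 ≤ t) (hx : ContinuousOn x (uIcc 0 t))
    (hx_pos : ∀ᵐ s ∂volume.restrict (Ioc 0 t), 0 < x s)
    (hμx : IntervalIntegrable (fun s => μ (x s)) volume 0 t) :
    expENN (ENNReal.ofReal κ * ∫⁻ s in Ioc 0 t, ENNReal.ofReal (smoothAbs δ (x s)) ^ (-p)) *
        ENNReal.ofReal (Real.exp (-k * (∫ s in 0..t, x s ^ q) - a * smoothAbs δ (x t) ^ r)) ≤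
      ENNReal.ofReal (Real.exp (C * t)) * ENNReal.ofReal (Real.exp (-(a * smoothAbs δ (x t) ^ r) +
        ∫ s in 0..t, expCompensator μ δ a r (x s))) := by
  have hle := le_integral_expCompensator hμ hδ hq hr h ht hx hx_pos hμx
  have hnonneg : 0 ≤ ∫ s in 0..t, smoothAbs δ (x s) ^ (-p) :=
    intervalIntegral.integral_nonneg ht fun s _ => Real.rpow_nonneg (smoothAbs_pos hδ _).le _
  rw [lintegral_ofReal_smoothAbs_rpow hδ _ ht hx, ← ENNReal.ofReal_mul hκ,
    expENN_ofReal (mul_nonneg hκ hnonneg), ← ENNReal.ofReal_mul (Real.exp_nonneg _),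
    ← ENNReal.ofReal_mul (Real.exp_nonneg _), ← Real.exp_add, ← Real.exp_add]
  exact ENNReal.ofReal_le_ofReal (Real.exp_le_exp.mpr (by linarith))

theorem tendsto_expENN_mul_exp_smoothAbs {κ J a p r : ℝ} (hp : 0 ≤ p) (hr : 0 ≤ r) {x : ℝ → ℝ}
    (hx_nonneg : ∀ s, 0 ≤ x s) {t : ℝ} (ht : 0 ≤ t) (hx : ContinuousOn x (uIcc 0 t)) {δ : ℕ → ℝ}
    (hδ : ∀ n, 0 ≤ δ n) (hδ_anti : Antitone δ) (hδ_lim : Tendsto δ atTop (nhds 0)) :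
    Tendsto (fun n => expENN (ENNReal.ofReal κ *
          ∫⁻ s in Ioc 0 t, ENNReal.ofReal (smoothAbs (δ n) (x s)) ^ (-p)) *
        ENNReal.ofReal (Real.exp (J - a * smoothAbs (δ n) (x t) ^ r))) atTop
      (nhds (expENN (ENNReal.ofReal κ * ∫⁻ s in Ioc 0 t, ENNReal.ofReal (x s) ^ (-p)) *
        ENNReal.ofReal (Real.exp (J - a * x t ^ r)))) := by
  have hx_meas : AEMeasurable x (volume.restrict (Ioc 0 t)) :=
    (hx.mono (uIcc_of_le ht ▸ Ioc_subset_Icc_self)).aemeasurable measurableSet_Ioc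
  have hinner := tendsto_lintegral_ofReal_smoothAbs_rpow_neg hx_meas hx_nonneg hp hδ hδ_anti hδ_lim
  have hsmooth := ((continuous_smoothAbs_left (x t)).tendsto 0).comp hδ_lim
  rw [smoothAbs_zero_left (hx_nonneg t)] at hsmooth
  exact ENNReal.Tendsto.mul
    ((continuous_expENN.tendsto _).comp
      (ENNReal.Tendsto.const_mul hinner (.inr ENNReal.ofReal_ne_top)))
    (.inr ENNReal.ofReal_ne_top)
    (ENNReal.tendsto_ofReal ((hsmooth.rpow_const (.inr hr)).const_mul a |>.const_sub J).rexp)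
    (.inl (ENNReal.ofReal_pos.mpr (Real.exp_pos _)).ne')

theorem IsUnitDiffusionOn.lintegral_expENN_le_of_le_expCompensator {Ω : Type*}
    {mΩ : MeasurableSpace Ω} {ℱ : Filtration ℝ mΩ} {P : Measure Ω} [IsProbabilityMeasure P] {T : ℝ}
    {W X : ℝ → Ω → ℝ} {μ : ℝ → ℝ} (hX : IsUnitDiffusionOn X (fun t ω => μ (X t ω)) W ℱ T P)
    (hμ : Measurable μ) (hX_nonneg : ∀ t ω, 0 ≤ X t ω) {κ k C a p q r : ℝ} (hκ : 0 ≤ κ)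
    (ha : 0 ≤ a) (hp : 0 ≤ p) (hq : 0 ≤ q) (hr0 : 0 ≤ r) (hr1 : r ≤ 1)
    (h : ∀ δ y, 0 < δ → 0 < y →
      κ * smoothAbs δ y ^ (-p) - k * y ^ q - C ≤ expCompensator μ δ a r y)
    {t : ℝ} (ht : t ∈ Icc 0 T) :
    ∫⁻ ω, expENN (ENNReal.ofReal κ * ∫⁻ s in Ioc 0 t, ENNReal.ofReal (X s ω) ^ (-p)) *
        ENNReal.ofReal (Real.exp (-k * (∫ s in 0..t, X s ω ^ q) - a * X t ω ^ r)) ∂P ≤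
      ENNReal.ofReal (Real.exp (C * t)) *
        ∫⁻ ω, ENNReal.ofReal (Real.exp (-a * X 0 ω ^ r)) ∂P := by
  obtain ⟨δ, hδ_anti, hδ, hδ_lim⟩ := exists_seq_strictAnti_tendsto (0 : ℝ)
  have hmeas (n : ℕ) := hX.measurable_exp_expCompensator hμ (δ n) a r ht
  refine lintegral_le_of_ae_le_liminf (fun n => ((hmeas n).const_mul _).aemeasurable) ?_
    (.of_forall fun n => (lintegral_const_mul _ (hmeas n)).trans_le <| mul_le_mul' le_rfl <|
      (hX.lintegral_exp_expCompensator_le (hδ n) a hr1 ht).trans (lintegral_mono fun ω => ?_))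
  · filter_upwards [hX.ae_intervalIntegrable ht, hX.ae_ae_ne_zero hμ ht] with ω hμX hne
    have hx := hX.continuousOn_uIcc ht ω
    have hpos : ∀ᵐ s ∂volume.restrict (Ioc 0 t), 0 < X s ω :=
      hne.mono fun s hs => (hX_nonneg s ω).lt_of_ne' hs
    rw [← (tendsto_expENN_mul_exp_smoothAbs hp hr0 (hX_nonneg · ω) ht.1 hx (fun n => (hδ n).le)
      hδ_anti.antitone hδ_lim).liminf_eq]
    exact liminf_le_liminf (.of_forall fun n => expENN_mul_exp_le_of_le_expCompensator hμ (hδ n)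
      hκ hq hr1 (fun y => h (δ n) y (hδ n)) ht.1 hx hpos hμX)
  · have hle : X 0 ω ^ r ≤ smoothAbs (δ n) (X 0 ω) ^ r :=
      Real.rpow_le_rpow (hX_nonneg 0 ω) ((le_abs_self _).trans (abs_le_smoothAbs _ _)) hr0
    rw [neg_mul]
    gcongr

end InverseMoments

section BesselDrift

theorem rpow_two_sub_two_mul_le_of_lt {A b p y : ℝ} (hp1 : 1 ≤ p) (hp2 : p < 2) (hb : 0 < b)
    (hy : 0 < y) (h : b < A * y ^ (2 - p)) :
    y ^ (2 - 2 * p) ≤ (A / b) ^ ((2 * p - 2) / (2 - p)) := by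
  have hp2' : 2 - p ≠ 0 := by linarith
  calc y ^ (2 - 2 * p) = (y ^ (-(2 - p))) ^ ((2 * p - 2) / (2 - p)) := by
        rw [← Real.rpow_mul hy.le]
        congr 1
        field_simp
        ring
    _ ≤ (A / b) ^ ((2 * p - 2) / (2 - p)) := by
        refine Real.rpow_le_rpow (by positivity) ?_ (div_nonneg (by linarith) (by linarith))
        rw [Real.rpow_neg hy.le, inv_eq_one_div, div_le_div_iff₀ (by positivity) hb, one_mul]
        exact h.le

theorem half_sq_mul_rpow_le {b p y : ℝ} (hp1 : 1 ≤ p) (hp2 : p < 2) (hb : 0 < b) (hy : 0 < y)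
    (ρ : ℝ) :
    (ρ * (2 - p) * y ^ (1 - p)) ^ 2 / 2 ≤
      (2 - p) * b / 2 * y ^ (-p) + ρ ^ 2 / 2 * (ρ ^ 2 / b) ^ ((2 * p - 2) / (2 - p)) := by
  have hr0 : 0 ≤ 2 - p := by linarith
  have hr1 : (2 - p) ^ 2 ≤ 1 := pow_le_one₀ hr0 (by linarith)
  have hsq : (y ^ (1 - p)) ^ 2 = y ^ (2 - 2 * p) := by
    rw [← Real.rpow_mul_natCast hy.le]
    ring_nf
  have hsplit : y ^ (2 - 2 * p) = y ^ (2 - p) * y ^ (-p) := by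
    rw [← Real.rpow_add hy]
    ring_nf
  rw [mul_pow, mul_pow, hsq]
  rcases le_or_gt (ρ ^ 2 * y ^ (2 - p)) b with hle | hlt
  · calc ρ ^ 2 * (2 - p) ^ 2 * y ^ (2 - 2 * p) / 2
        = (2 - p) ^ 2 * (ρ ^ 2 * y ^ (2 - p)) / 2 * y ^ (-p) := by rw [hsplit]; ring
      _ ≤ (2 - p) * b / 2 * y ^ (-p) := by
          gcongr
          exact pow_le_of_le_one hr0 (by linarith) two_ne_zero
      _ ≤ _ := le_add_of_nonneg_right (by positivity)
  · calc ρ ^ 2 * (2 - p) ^ 2 * y ^ (2 - 2 * p) / 2 ≤ ρ ^ 2 * 1 * y ^ (2 - 2 * p) / 2 := by gcongr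
      _ ≤ ρ ^ 2 / 2 * (ρ ^ 2 / b) ^ ((2 * p - 2) / (2 - p)) := by
          rw [mul_one, mul_div_right_comm]
          gcongr
          exact rpow_two_sub_two_mul_le_of_lt hp1 hp2 hb hy hlt
      _ ≤ _ := le_add_of_nonneg_left (by positivity)

theorem sub_le_expCompensator_of_le_mul {μ : ℝ → ℝ} {α ct c p ρ δ y : ℝ} (hp0 : 0 ≤ p)
    (hp2 : p ≤ 2) (hρ : 0 ≤ ρ) (hct : 0 ≤ ct) (hδ : 0 < δ) (hy : 0 < y)
    (hdrift : α - ct * y ^ c ≤ y * μ y) :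
    ρ * (2 - p) * (α + (1 - p) / 2) * smoothAbs δ y ^ (-p) - ct * ρ * (2 - p) * y ^ (c - p) -
        (ρ * (2 - p) * smoothAbs δ y ^ (1 - p)) ^ 2 / 2 ≤
      expCompensator μ δ ρ (2 - p) y := by
  have hs := smoothAbs_pos hδ y
  have hr : 0 ≤ 2 - p := sub_nonneg.mpr hp2
  have hpow : y ^ c * smoothAbs δ y ^ (-p) ≤ y ^ (c - p) := by
    rw [sub_eq_add_neg, Real.rpow_add hy]
    exact mul_le_mul_of_nonneg_left (Real.rpow_le_rpow_of_nonpos hy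
      ((le_abs_self y).trans (abs_le_smoothAbs δ y)) (neg_nonpos.mpr hp0)) (by positivity)
  have hμ : α * smoothAbs δ y ^ (-p) - ct * y ^ (c - p) ≤ y * smoothAbs δ y ^ (-p) * μ y := by
    calc α * smoothAbs δ y ^ (-p) - ct * y ^ (c - p)
        ≤ (α - ct * y ^ c) * smoothAbs δ y ^ (-p) := by
          linarith [mul_le_mul_of_nonneg_left hpow hct]
      _ ≤ y * μ y * smoothAbs δ y ^ (-p) := by gcongr
      _ = y * smoothAbs δ y ^ (-p) * μ y := by ring
  have hsecond : (1 - p) * smoothAbs δ y ^ (-p) ≤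
      smoothAbs δ y ^ (-p) + -p * (y ^ 2 * smoothAbs δ y ^ (-p - 2)) := by
    linarith [mul_le_mul_of_nonneg_left (sq_mul_smoothAbs_rpow_le hδ (-p) y) hp0]
  have hfirst : (ρ * (2 - p) * (y * smoothAbs δ y ^ (-p))) ^ 2 ≤
      (ρ * (2 - p) * smoothAbs δ y ^ (1 - p)) ^ 2 := by
    gcongr
    exact ((le_abs_self _).trans (abs_mul_smoothAbs_rpow_le hδ (-p) y)).trans_eq (by ring_nf)
  have hcoef : 0 ≤ ρ * (2 - p) := mul_nonneg hρ hr
  rw [expCompensator, show 2 - p - 2 = -p by ring]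
  linarith [mul_le_mul_of_nonneg_left hμ hcoef, mul_le_mul_of_nonneg_left hsecond hcoef]

theorem bessel_le_expCompensator {μ : ℝ → ℝ} {α ct c p ρ ρt δ y : ℝ} (hp1 : 1 ≤ p) (hp2 : p < 2)
    (hpα : p < 1 + 2 * α) (hρ : 0 ≤ ρ) (hρt : ρt < ρ) (hct : 0 ≤ ct) (hδ : 0 < δ) (hy : 0 < y)
    (hdrift : α - ct * y ^ c ≤ y * μ y) :
    ρt * (2 - p) * (α + (1 - p) / 2) * smoothAbs δ y ^ (-p) - ct * ρ * (2 - p) * y ^ (c - p) -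
        ρ ^ 2 / 2 * (ρ ^ 2 / ((ρ - ρt) * (2 * α + 1 - p))) ^ ((2 * p - 2) / (2 - p)) ≤
      expCompensator μ δ ρ (2 - p) y := by
  have hb : 0 < (ρ - ρt) * (2 * α + 1 - p) := mul_pos (by linarith) (by linarith)
  linarith [half_sq_mul_rpow_le hp1 hp2 hb (smoothAbs_pos hδ y) ρ,
    sub_le_expCompensator_of_le_mul (zero_le_one.trans hp1) hp2.le hρ hct hδ hy hdrift]

end BesselDrift

theorem exponential_inverse_moments_for_Bessel_type_processes
    {Ω : Type*} [MeasurableSpace Ω] (P : Measure Ω) [IsProbabilityMeasure P]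
    (T : ℝ) (hT : 0 ≤ T)
    (F : ℝ → MeasurableSpace Ω)
    (hF_mono : ∀ s t : ℝ, s ≤ t → F s ≤ F t)
    (hF_le : ∀ t : ℝ, F t ≤ (inferInstance : MeasurableSpace Ω))
    (μ : ℝ → ℝ) (hμmeas : Measurable μ)
    (W X : ℝ → Ω → ℝ)
    (hW0 : ∀ ω, W 0 ω = 0)
    (hWadapt : ∀ t ∈ Set.Icc (0:ℝ) T, @Measurable Ω ℝ (F t) _ (W t))
    (hWcont : ∀ ω, ContinuousOn (fun t => W t ω) (Set.Icc 0 T))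
    (hWlaw : ∀ s t : ℝ, 0 ≤ s → s ≤ t → t ≤ T →
      Measure.map (fun ω => W t ω - W s ω) P = gaussianReal 0 (Real.toNNReal (t - s)))
    (hWindep : ∀ s t : ℝ, 0 ≤ s → s ≤ t → t ≤ T →
      Indep (MeasurableSpace.comap (fun ω => W t ω - W s ω) inferInstance) (F s) P)
    (hXnonneg : ∀ t ω, 0 ≤ X t ω)
    (hXadapt : ∀ t ∈ Set.Icc (0:ℝ) T, @Measurable Ω ℝ (F t) _ (X t))
    (hXcont : ∀ ω, ContinuousOn (fun t => X t ω) (Set.Icc 0 T))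
    (hXint : ∀ᵐ ω ∂P, IntervalIntegrable (fun s => |μ (X s ω)|) volume 0 T)
    (hSDE : ∀ t ∈ Set.Icc (0:ℝ) T, ∀ᵐ ω ∂P,
      X t ω = X 0 ω + (∫ s in (0:ℝ)..t, μ (X s ω)) + W t ω)
    (α p ct c : ℝ) (hα : 0 < α) (hp1 : 1 < p) (hp2 : p < min (1 + 2 * α) 2)
    (hct : 0 ≤ ct) (hc : p ≤ c)
    (hdrift : ∀ x : ℝ, 0 < x → α - ct * x ^ c ≤ x * μ x) :
    ∀ t ∈ Set.Icc (0:ℝ) T, ∀ ρ ρt : ℝ, 0 < ρt → ρt < ρ →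
      (∫⁻ ω, expENN (ENNReal.ofReal (ρt * (2 - p) * (α + (1 - p) / 2)) *
            ∫⁻ s in Set.Ioc (0:ℝ) t, (ENNReal.ofReal (X s ω)) ^ (-p)) *
          ENNReal.ofReal (Real.exp (- (ct * ρ * (2 - p)) * (∫ s in (0:ℝ)..t, (X s ω) ^ (c - p))
            - ρ * (X t ω) ^ (2 - p))) ∂P)
        ≤ ENNReal.ofReal (Real.exp (t * ρ ^ 2 / 2 *
              (ρ ^ 2 / ((ρ - ρt) * (2 * α + 1 - p))) ^ ((2 * p - 2) / (2 - p)))) *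
          ∫⁻ ω, ENNReal.ofReal (Real.exp (- ρ * (X 0 ω) ^ (2 - p))) ∂P
      ∧ ENNReal.ofReal (Real.exp (t * ρ ^ 2 / 2 *
              (ρ ^ 2 / ((ρ - ρt) * (2 * α + 1 - p))) ^ ((2 * p - 2) / (2 - p)))) *
          (∫⁻ ω, ENNReal.ofReal (Real.exp (- ρ * (X 0 ω) ^ (2 - p))) ∂P) < ⊤ := by
  intro t ht ρ ρt hρt hρ
  have hpα : p < 1 + 2 * α := hp2.trans_le (min_le_left _ _)
  have hp2' : p < 2 := hp2.trans_le (min_le_right _ _)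
  have hX : IsUnitDiffusionOn X (fun t ω => μ (X t ω)) W ⟨F, hF_mono, hF_le⟩ T P :=
    ⟨⟨hW0, hWadapt, hWcont, hWlaw, hWindep⟩, hXadapt, hXcont, hXint.mono fun ω =>
      intervalIntegrable_comp_of_abs hμmeas (uIcc_of_le hT ▸ hXcont ω), hSDE⟩
  constructor
  · have hκ : 0 ≤ ρt * (2 - p) * (α + (1 - p) / 2) := by
      have : 0 < α + (1 - p) / 2 := by linarith
      have : 0 < 2 - p := by linarith
      positivity
    have hbound := hX.lintegral_expENN_le_of_le_expCompensator hμmeas hXnonneg hκ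
      (hρt.trans hρ).le (zero_lt_one.trans hp1).le (sub_nonneg.mpr hc) (by linarith) (by linarith)
      (fun δ y hδ hy => bessel_le_expCompensator hp1.le hp2' hpα (hρt.trans hρ).le hρ hct hδ hy
        (hdrift y hy)) ht
    convert hbound using 4
    ring
  · have hexp (ω : Ω) : Real.exp (-ρ * X 0 ω ^ (2 - p)) ≤ 1 :=
      Real.exp_le_one_iff.mpr (mul_nonpos_of_nonpos_of_nonneg (by linarith)
        (Real.rpow_nonneg (hXnonneg 0 ω) _))
    exact ENNReal.mul_lt_top ENNReal.ofReal_lt_top <|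
      (lintegral_mono fun ω => ENNReal.ofReal_le_one.mpr (hexp ω)).trans_lt (by simp)

end
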